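/- arXiv:2012.06698 — 6 statements merged into one kernel-verified Lean document; each statement's English description precedes it below -/
import Mathlib

section
/- Let n ≥ 3 and let D be a digraph of order n belonging to D_{n,1} ∪ D_{n,2}. Then for every vertex r of D, D contains n−2 pairwise arc-disjoint out-branchings rooted at r. -/
/-!
Only one property of the deleted arc set `M` matters: it is the graph of a partial injection, i.e.
every vertex has at most one out-arc and at most one in-arc in `M`.

Fix a root `r`, and choose `s ≠ r` to be the out-neighbour of `r` in `M` if there is one, and any
other vertex otherwise.  Each of the `n - 2` vertices `v ∉ {r, s}` yields an out-branching `T_v`: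
it starts with the arc `r → v` and then joins `v` directly to all remaining vertices, except to the
`M`-successor `u` of `v` (if `u` exists and `u ≠ r`), since the arc `v → u` is missing.  That vertex
gets the parent `s`, or the parent `r` in the case `u = s`.

All these arcs survive in `D`, because `M` has at most one arc leaving `r` or `v` and at most one arc
entering `u`.  The trees are arc-disjoint: arcs leaving a vertex outside `{r, s}` identify their
tree, an arc `s → u` or `r → s` belongs to `T_v` only for the `M`-predecessor `v` of its head, and
`r → v` with `v ≠ s` belongs only to `T_v`.
-/

/-!
Formalization of directed tree connectivity (Sun, "Extremal results for
directed tree connectivity").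

A digraph (no loops, no parallel arcs) on a vertex type `V` is given by an
irreflexive adjacency relation.  Out-trees, `(S,r)`-trees, the parameters
`κ_k`, `λ_k`, minimally generalized `(k,ℓ)`-vertex/arc-strongly connected
digraphs, the families `D_{n,1}`, `D_{n,2}` and the extremal functions
`f, g, F, G` are defined below.
-/

namespace TreeConn

/-- A digraph without loops or parallel arcs. -/
structure Dgr (V : Type) where
  Adj : V → V → Prop
  loopless : ∀ v, ¬ Adj v v

variable {V : Type}

/-- The arc set of a digraph, as a set of ordered pairs. -/
def Dgr.Arcs (D : Dgr V) : Set (V × V) := {p | D.Adj p.1 p.2}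

/-- Delete a single arc. -/
def Dgr.deleteArc (D : Dgr V) (e : V × V) : Dgr V :=
  ⟨fun u v => D.Adj u v ∧ (u, v) ≠ e, fun v h => D.loopless v h.1⟩

/-- Delete a set of arcs. -/
def Dgr.deleteArcs (D : Dgr V) (M : Set (V × V)) : Dgr V :=
  ⟨fun u v => D.Adj u v ∧ (u, v) ∉ M, fun v h => D.loopless v h.1⟩

/-- Vertices incident to some arc of the arc set `T`. -/
def averts (T : Set (V × V)) : Set V := {v | ∃ u, (u, v) ∈ T ∨ (v, u) ∈ T}

/-- Vertex set of the tree with arc set `T` and root `r`. -/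
def tverts (T : Set (V × V)) (r : V) : Set V := averts T ∪ {r}

/-- The arc set `T` forms an out-tree rooted at `r`: every vertex incident
to `T` is reachable from `r` inside `T`, the root has in-degree `0`, and
every other vertex has in-degree exactly one. -/
def IsOutTree (T : Set (V × V)) (r : V) : Prop :=
  (∀ v ∈ averts T, Relation.ReflTransGen (fun a b => (a, b) ∈ T) r v) ∧
  (∀ p ∈ T, p.2 ≠ r) ∧
  (∀ v ∈ averts T, v ≠ r → ∃! u, (u, v) ∈ T)

/-- `T` is an `(S, r)`-tree of `D`: an out-tree of `D` rooted at `r`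
containing all vertices of `S`. -/
def IsSRTree (D : Dgr V) (S : Set V) (r : V) (T : Set (V × V)) : Prop :=
  T ⊆ D.Arcs ∧ IsOutTree T r ∧ S ⊆ tverts T r

/-- `T` is an out-branching (spanning out-tree) of `D` rooted at `r`. -/
def IsOutBranching (D : Dgr V) (r : V) (T : Set (V × V)) : Prop :=
  T ⊆ D.Arcs ∧ IsOutTree T r ∧ tverts T r = Set.univ

/-- Two trees (arc sets) are arc-disjoint. -/
def ArcDisj (T₁ T₂ : Set (V × V)) : Prop := T₁ ∩ T₂ = ∅

/-- Two arc-disjoint `(S,r)`-trees are internally disjoint: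
`V(T₁) ∩ V(T₂) = S`. -/
def IntDisj (S : Set V) (r : V) (T₁ T₂ : Set (V × V)) : Prop :=
  ArcDisj T₁ T₂ ∧ tverts T₁ r ∩ tverts T₂ r = S

/-- `κ_{S,r}(D)`: maximum number of pairwise internally disjoint
`(S,r)`-trees in `D`. -/
noncomputable def kappaSr (D : Dgr V) (S : Set V) (r : V) : ℕ :=
  sSup {m | ∃ f : Fin m → Set (V × V), (∀ i, IsSRTree D S r (f i)) ∧
    ∀ i j, i ≠ j → IntDisj S r (f i) (f j)}

/-- `λ_{S,r}(D)`: maximum number of pairwise arc-disjoint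
`(S,r)`-trees in `D`. -/
noncomputable def lambdaSr (D : Dgr V) (S : Set V) (r : V) : ℕ :=
  sSup {m | ∃ f : Fin m → Set (V × V), (∀ i, IsSRTree D S r (f i)) ∧
    ∀ i j, i ≠ j → ArcDisj (f i) (f j)}

/-- The generalized `k`-vertex-strong connectivity `κ_k(D)`. -/
noncomputable def kappaK (D : Dgr V) (k : ℕ) : ℕ :=
  sInf {m | ∃ S : Set V, ∃ r ∈ S, S.ncard = k ∧ m = kappaSr D S r}

/-- The generalized `k`-arc-strong connectivity `λ_k(D)`. -/
noncomputable def lambdaK (D : Dgr V) (k : ℕ) : ℕ :=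
  sInf {m | ∃ S : Set V, ∃ r ∈ S, S.ncard = k ∧ m = lambdaSr D S r}

/-- A digraph is strong if every vertex can reach every other vertex. -/
def Strong (D : Dgr V) : Prop := ∀ u v, Relation.ReflTransGen D.Adj u v

/-- A digraph is minimally strong if it is strong but deleting any arc
destroys strongness. -/
def MinimallyStrong (D : Dgr V) : Prop :=
  Strong D ∧ ∀ e ∈ D.Arcs, ¬ Strong (D.deleteArc e)

/-- `D` is minimally generalized `(k, ℓ)`-vertex-strongly connected. -/
def MinVSC (D : Dgr V) (k ℓ : ℕ) : Prop :=
  ℓ ≤ kappaK D k ∧ ∀ e ∈ D.Arcs, kappaK (D.deleteArc e) k ≤ ℓ - 1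

/-- `D` is minimally generalized `(k, ℓ)`-arc-strongly connected. -/
def MinASC (D : Dgr V) (k ℓ : ℕ) : Prop :=
  ℓ ≤ lambdaK D k ∧ ∀ e ∈ D.Arcs, lambdaK (D.deleteArc e) k ≤ ℓ - 1

/-- The complete digraph `↔K_n` on `Fin n`. -/
def completeD (n : ℕ) : Dgr (Fin n) := ⟨fun u v => u ≠ v, fun _ h => h rfl⟩

/-- The arc set `M` induces a vertex-disjoint union of directed cycles
(2-cycles allowed) whose vertex set is exactly `W`: all arcs of `M` are
non-loops inside `W`, and every vertex of `W` has exactly one out-arc and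
exactly one in-arc in `M`. -/
def CycleFactorOn (M : Set (V × V)) (W : Set V) : Prop :=
  (∀ p ∈ M, p.1 ∈ W ∧ p.2 ∈ W ∧ p.1 ≠ p.2) ∧
  (∀ v ∈ W, ∃! u, (v, u) ∈ M) ∧
  (∀ v ∈ W, ∃! u, (u, v) ∈ M)

/-- The family `D_{n,1}`: digraphs obtained from `↔K_n` by deleting an arc
set `M` inducing a vertex-disjoint union of cycles covering all `n`
vertices. -/
def D1 (n : ℕ) : Set (Dgr (Fin n)) :=
  {D | ∃ M : Set (Fin n × Fin n), CycleFactorOn M Set.univ ∧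
    D = (completeD n).deleteArcs M}

/-- The family `D_{n,2}`: digraphs obtained from `↔K_n` by deleting an arc
set `M` inducing a vertex-disjoint union of cycles covering exactly `n - 1`
vertices. -/
def D2 (n : ℕ) : Set (Dgr (Fin n)) :=
  {D | ∃ M : Set (Fin n × Fin n), ∃ w : Fin n, CycleFactorOn M ({w}ᶜ) ∧
    D = (completeD n).deleteArcs M}

/-- `f(n,k,ℓ)`: minimum number of arcs of a minimally generalized
`(k,ℓ)`-vertex-strongly connected digraph of order `n`. -/
noncomputable def fMin (n k ℓ : ℕ) : ℕ :=
  sInf {m | ∃ D : Dgr (Fin n), MinVSC D k ℓ ∧ D.Arcs.ncard = m}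

/-- `g(n,k,ℓ)`: minimum number of arcs of a minimally generalized
`(k,ℓ)`-arc-strongly connected digraph of order `n`. -/
noncomputable def gMin (n k ℓ : ℕ) : ℕ :=
  sInf {m | ∃ D : Dgr (Fin n), MinASC D k ℓ ∧ D.Arcs.ncard = m}

/-- `F(n,k,ℓ)`: maximum number of arcs of a minimally generalized
`(k,ℓ)`-vertex-strongly connected digraph of order `n`. -/
noncomputable def FMax (n k ℓ : ℕ) : ℕ :=
  sSup {m | ∃ D : Dgr (Fin n), MinVSC D k ℓ ∧ D.Arcs.ncard = m}

/-- `G(n,k,ℓ)`: maximum number of arcs of a minimally generalized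
`(k,ℓ)`-arc-strongly connected digraph of order `n`. -/
noncomputable def GMax (n k ℓ : ℕ) : ℕ :=
  sSup {m | ∃ D : Dgr (Fin n), MinASC D k ℓ ∧ D.Arcs.ncard = m}

/-- The set of arcs `p b → b`, over all `b ≠ r`, given by a parent function `p`. -/
def parentArcs (p : V → V) (r : V) : Set (V × V) := {e | e.2 ≠ r ∧ e.1 = p e.2}

theorem parentArcs_isOutBranching (D : Dgr V) (p : V → V) (r : V)
    (hadj : ∀ b, b ≠ r → D.Adj (p b) b)
    (hreach : ∀ b, Relation.ReflTransGen (fun a b => (a, b) ∈ parentArcs p r) r b) :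
    IsOutBranching D r (parentArcs p r) := by
  refine ⟨?_, ⟨fun v _ => hreach v, fun e he => he.1, ?_⟩, ?_⟩
  · rintro ⟨a, b⟩ ⟨hb, h : a = p b⟩
    subst h
    exact hadj b hb
  · intro v _ hv
    exact ⟨p v, ⟨hv, rfl⟩, fun u hu => hu.2⟩
  · refine Set.eq_univ_of_forall fun v => ?_
    by_cases hv : v = r
    · exact Or.inr hv
    · exact Or.inl ⟨p v, Or.inl ⟨hv, rfl⟩⟩

open Classical in
/-- The parent function of the tree `T_v`: its values are meant for vertices other than the root
`r`; `s` is the auxiliary vertex that takes over the `M`-successor of `v`. -/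
noncomputable def treeParent (M : Set (V × V)) (r s v u : V) : V :=
  if u = v then r else if (v, u) ∈ M then (if u = s then r else s) else v

theorem treeParent_isOutBranching (D : Dgr V) (M : Set (V × V))
    (hD : ∀ a b, a ≠ b → (a, b) ∉ M → D.Adj a b)
    (hout : ∀ a b c, (a, b) ∈ M → (a, c) ∈ M → b = c)
    (hin : ∀ a b c, (a, c) ∈ M → (b, c) ∈ M → a = b)
    (r s v : V) (hs : s ≠ r) (hrs : ∀ b, (r, b) ∈ M → b = s) (hvr : v ≠ r) (hvs : v ≠ s) :
    IsOutBranching D r (parentArcs (treeParent M r s v) r) := by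
  apply parentArcs_isOutBranching
  · intro b hb
    unfold treeParent
    split_ifs with h1 h2 h3
    · exact hD _ _ hb.symm fun h => hvs (h1 ▸ hrs b h)
    · exact hD _ _ hb.symm fun h => hvr (hin _ _ _ h2 h)
    · exact hD _ _ (Ne.symm h3) fun h => hvs (hin _ _ _ h2 h)
    · exact hD _ _ (Ne.symm h1) h2
  · have hv : Relation.ReflTransGen
        (fun a b => (a, b) ∈ parentArcs (treeParent M r s v) r) r v :=
      Relation.ReflTransGen.single ⟨hvr, by simp [treeParent]⟩
    intro b
    by_cases hb : b = r
    · rw [hb]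
    by_cases h1 : b = v
    · rw [h1]; exact hv
    by_cases h2 : (v, b) ∈ M
    · by_cases h3 : b = s
      · exact Relation.ReflTransGen.single ⟨hb, by rw [treeParent, if_neg h1, if_pos h2, if_pos h3]⟩
      -- `b ≠ s` is the only `M`-successor of `v`, so `T_v` contains the path `r → v → s → b`.
      · have h4 : (v, s) ∉ M := fun h => h3 (hout _ _ _ h2 h)
        exact (hv.tail ⟨hs, by simp [treeParent, hvs.symm, h4]⟩).tail
          ⟨hb, by simp [treeParent, h1, h2, h3]⟩
    · exact hv.tail ⟨hb, by simp [treeParent, h1, h2]⟩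

theorem treeParent_arcDisj (M : Set (V × V))
    (hin : ∀ a b c, (a, c) ∈ M → (b, c) ∈ M → a = b)
    (r s v w : V) (hs : s ≠ r) (hvr : v ≠ r) (hvs : v ≠ s) (hwr : w ≠ r) (hws : w ≠ s)
    (hvw : v ≠ w) :
    ArcDisj (parentArcs (treeParent M r s v) r) (parentArcs (treeParent M r s w) r) := by
  refine Set.eq_empty_of_forall_notMem ?_
  rintro ⟨a, b⟩ ⟨⟨-, h1⟩, -, h2⟩
  have h : treeParent M r s v b = treeParent M r s w b := h1.symm.trans h2
  have := hin v w b
  unfold treeParent at h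
  split_ifs at h <;> grind

theorem exists_arcDisj_outBranchings (n : ℕ) (hn : 3 ≤ n) (D : Dgr (Fin n))
    (M : Set (Fin n × Fin n)) (hD : ∀ a b, a ≠ b → (a, b) ∉ M → D.Adj a b)
    (hout : ∀ a b c, (a, b) ∈ M → (a, c) ∈ M → b = c)
    (hin : ∀ a b c, (a, c) ∈ M → (b, c) ∈ M → a = b)
    (hne : ∀ a, (a, a) ∉ M) (r : Fin n) :
    ∃ f : Fin (n - 2) → Set (Fin n × Fin n),
      (∀ i, IsOutBranching D r (f i)) ∧
      ∀ i j, i ≠ j → ArcDisj (f i) (f j) := by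
  obtain ⟨s, hs, hrs⟩ : ∃ s, s ≠ r ∧ ∀ b, (r, b) ∈ M → b = s := by
    by_cases h : ∃ s, (r, s) ∈ M
    · obtain ⟨s, h⟩ := h
      exact ⟨s, fun e => hne r (e ▸ h), fun b hb => hout _ _ _ hb h⟩
    · have : Nontrivial (Fin n) := Fin.nontrivial_iff_two_le.mpr (by omega)
      obtain ⟨s, hs⟩ := exists_ne r
      exact ⟨s, hs, fun b hb => (h ⟨b, hb⟩).elim⟩
  have hcard : (({r, s} : Finset (Fin n))ᶜ).card = n - 2 := by
    rw [Finset.card_compl, Finset.card_pair hs.symm, Fintype.card_fin]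
  let g := (({r, s} : Finset (Fin n))ᶜ).orderEmbOfFin hcard
  have hg : ∀ i, g i ≠ r ∧ g i ≠ s := fun i => by
    have h : g i ∈ ({r, s} : Finset (Fin n))ᶜ := Finset.orderEmbOfFin_mem _ hcard i
    simpa only [Finset.mem_compl, Finset.mem_insert, Finset.mem_singleton, not_or] using h
  exact ⟨fun i => parentArcs (treeParent M r s (g i)) r,
    fun i => treeParent_isOutBranching D M hD hout hin r s (g i) hs hrs (hg i).1 (hg i).2,
    fun i j hij => treeParent_arcDisj M hin r s (g i) (g j) hs (hg i).1 (hg i).2 (hg j).1 (hg j).2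
      fun h => hij (g.injective h)⟩

/-- if `n ≥ 3` and `D ∈ D_{n,1} ∪ D_{n,2}`, then for every
vertex `r`, `D` contains `n - 2` pairwise arc-disjoint out-branchings
rooted at `r`. -/
theorem stmt_0 (n : ℕ) (hn : 3 ≤ n) (D : Dgr (Fin n))
    (hD : D ∈ D1 n ∪ D2 n) (r : Fin n) :
    ∃ f : Fin (n - 2) → Set (Fin n × Fin n),
      (∀ i, IsOutBranching D r (f i)) ∧
      ∀ i j, i ≠ j → ArcDisj (f i) (f j) := by
  obtain ⟨M, W, ⟨h1, h2, h3⟩, rfl⟩ :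
      ∃ M W, CycleFactorOn M W ∧ D = (completeD n).deleteArcs M := by
    rcases hD with ⟨M, h, e⟩ | ⟨M, w, h, e⟩
    · exact ⟨M, _, h, e⟩
    · exact ⟨M, _, h, e⟩
  exact exists_arcDisj_outBranchings n hn ((completeD n).deleteArcs M) M (fun a b h h' => ⟨h, h'⟩)
    (fun a b c hb hc => (h2 a (h1 _ hb).1).unique hb hc)
    (fun a b c ha hb => (h3 c (h1 _ ha).2.1).unique ha hb)
    (fun a h => (h1 _ h).2.2 rfl) r

end TreeConn
end

section
/- Let n ≥ 3 and let D be a digraph of order n belonging to D_{n,1} ∪ D_{n,2}. Then for every set S ⊆ V(D) with |S| = 2 and every r ∈ S, D contains n−2 pairwise internally disjoint (S,r)-trees. -/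
/-! The deleted arc set `M` is the graph of a partial injection: each vertex has at most one
out-arc and at most one in-arc in `M`. Let `S = {r, s}`. For each of the `n - 2` vertices `x`
outside `S` the path `r → x → s` is available unless `(r, x) ∈ M` or `(x, s) ∈ M`.
If `(r, s) ∈ M`, no such `x` is obstructed. Otherwise there is at most one vertex `a` with
`(r, a) ∈ M` and at most one vertex `b` with `(b, s) ∈ M`. A single obstructed vertex is traded for
the arc `r → s`; two distinct obstructed vertices `a ≠ b` are traded for the arc `r → s` and the
path `r → b → a → s`, whose arcs avoid `M` because `M` is a partial injection. -/

/-!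
Formalization of directed tree connectivity (Sun, "Extremal results for
directed tree connectivity").

A digraph (no loops, no parallel arcs) on a vertex type `V` is given by an
irreflexive adjacency relation.  Out-trees, `(S,r)`-trees, the parameters
`κ_k`, `λ_k`, minimally generalized `(k,ℓ)`-vertex/arc-strongly connected
digraphs, the families `D_{n,1}`, `D_{n,2}` and the extremal functions
`f, g, F, G` are defined below.
-/

namespace TreeConn

variable {V : Type}

/-! ### Directed paths as `({r, s}, r)`-trees -/

/-- `T` is an `({r, s}, r)`-tree whose vertices outside `{r, s}` are exactly those of `I`, and each
of whose arcs, except possibly `(r, s)`, meets `I`. -/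
def GoodPath (D : Dgr V) (r s : V) (I : Set V) (T : Set (V × V)) : Prop :=
  IsSRTree D {r, s} r T ∧ tverts T r = {r, s} ∪ I ∧ r ∉ I ∧ s ∉ I ∧
  ∀ p ∈ T, p = (r, s) ∨ p.1 ∈ I ∨ p.2 ∈ I

theorem GoodPath.direct {D : Dgr V} {r s : V} (hrs : r ≠ s) (h : D.Adj r s) :
    GoodPath D r s ∅ {(r, s)} := by
  have hv : averts {(r, s)} = {r, s} := by
    ext v; simp only [averts, Set.mem_ofPred_eq, Set.mem_singleton_iff, Set.mem_insert_iff,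
      Prod.mk.injEq]; grind
  have hr : ∀ v ∈ averts {(r, s)},
      Relation.ReflTransGen (fun a b => (a, b) ∈ ({(r, s)} : Set (V × V))) r v := by
    have h1 : Relation.ReflTransGen (fun a b => (a, b) ∈ ({(r, s)} : Set (V × V))) r s :=
      .single (by simp)
    rw [hv]; rintro v (rfl | rfl)
    · exact .refl
    · exact h1
  have ht : tverts {(r, s)} r = {r, s} ∪ ∅ := by
    rw [tverts, hv]; ext v; simp only [Set.mem_union, Set.mem_insert_iff, Set.mem_singleton_iff,
      Set.mem_empty_iff_false]; grind
  refine ⟨⟨?_, ⟨hr, ?_, ?_⟩, ?_⟩, ht, ?_, ?_, ?_⟩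
  · rintro p rfl; exact h
  · rintro p rfl; exact hrs.symm
  · rw [hv]; rintro v (rfl | rfl) hne
    · exact absurd rfl hne
    · exact ⟨r, by simp, by simp⟩
  · rw [ht]; exact Set.subset_union_left
  · simp
  · simp
  · rintro p rfl; simp

theorem GoodPath.one {D : Dgr V} {r s x : V} (hrs : r ≠ s) (hxr : x ≠ r) (hxs : x ≠ s)
    (h1 : D.Adj r x) (h2 : D.Adj x s) :
    GoodPath D r s {x} {(r, x), (x, s)} := by
  have hv : averts {(r, x), (x, s)} = {r, s, x} := by
    ext v; simp only [averts, Set.mem_ofPred_eq, Set.mem_singleton_iff, Set.mem_insert_iff,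
      Prod.mk.injEq]; grind
  have hr : ∀ v ∈ averts {(r, x), (x, s)},
      Relation.ReflTransGen (fun a b => (a, b) ∈ ({(r, x), (x, s)} : Set (V × V))) r v := by
    have e1 : Relation.ReflTransGen
      (fun a b => (a, b) ∈ ({(r, x), (x, s)} : Set (V × V))) r x := .single (by simp)
    have e2 := e1.tail (c := s) (by simp)
    rw [hv]; rintro v (rfl | rfl | rfl)
    · exact .refl
    · exact e2
    · exact e1
  have ht : tverts {(r, x), (x, s)} r = {r, s} ∪ {x} := by
    rw [tverts, hv]; ext v; simp only [Set.mem_union, Set.mem_insert_iff, Set.mem_singleton_iff]; grind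
  refine ⟨⟨?_, ⟨hr, ?_, ?_⟩, ?_⟩, ht, ?_, ?_, ?_⟩
  · rintro p (rfl | rfl)
    exacts [h1, h2]
  · rintro p (rfl | rfl)
    exacts [hxr, hrs.symm]
  · rw [hv]; rintro v (rfl | rfl | rfl) hne
    · exact absurd rfl hne
    · exact ⟨x, by simp, fun y hy => by simpa [hxs.symm] using hy⟩
    · exact ⟨r, by simp, fun y hy => by simpa [hxs] using hy⟩
  · rw [ht]; exact Set.subset_union_left
  · simpa using hxr.symm
  · simpa using hxs.symm
  · rintro p (rfl | rfl) <;> simp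

theorem GoodPath.two {D : Dgr V} {r s a b : V} (hrs : r ≠ s) (har : a ≠ r) (has : a ≠ s)
    (hbr : b ≠ r) (hbs : b ≠ s) (hab : a ≠ b)
    (h1 : D.Adj r b) (h2 : D.Adj b a) (h3 : D.Adj a s) :
    GoodPath D r s {a, b} {(r, b), (b, a), (a, s)} := by
  have hv : averts {(r, b), (b, a), (a, s)} = {r, s, a, b} := by
    ext v; simp only [averts, Set.mem_ofPred_eq, Set.mem_singleton_iff, Set.mem_insert_iff,
      Prod.mk.injEq]; grind
  have hr : ∀ v ∈ averts {(r, b), (b, a), (a, s)}, Relation.ReflTransGen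
      (fun x y => (x, y) ∈ ({(r, b), (b, a), (a, s)} : Set (V × V))) r v := by
    have e1 : Relation.ReflTransGen
      (fun x y => (x, y) ∈ ({(r, b), (b, a), (a, s)} : Set (V × V))) r b := .single (by simp)
    have e2 := e1.tail (c := a) (by simp)
    have e3 := e2.tail (c := s) (by simp)
    rw [hv]; rintro v (rfl | rfl | rfl | rfl)
    · exact .refl
    · exact e3
    · exact e2
    · exact e1
  have ht : tverts {(r, b), (b, a), (a, s)} r = {r, s} ∪ {a, b} := by
    rw [tverts, hv]; ext v; simp only [Set.mem_union, Set.mem_insert_iff, Set.mem_singleton_iff]; grind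
  refine ⟨⟨?_, ⟨hr, ?_, ?_⟩, ?_⟩, ht, ?_, ?_, ?_⟩
  · rintro p (rfl | rfl | rfl)
    exacts [h1, h2, h3]
  · rintro p (rfl | rfl | rfl)
    exacts [hbr, har, hrs.symm]
  · rw [hv]; rintro v (rfl | rfl | rfl | rfl) hne
    · exact absurd rfl hne
    · exact ⟨a, by simp, fun y hy => by simpa [has.symm, hbs.symm] using hy⟩
    · exact ⟨b, by simp, fun y hy => by simpa [has, hab] using hy⟩
    · exact ⟨r, by simp, fun y hy => by simpa [hbs, hab.symm] using hy⟩
  · rw [ht]; exact Set.subset_union_left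
  · simp [har.symm, hbr.symm]
  · simp [has.symm, hbs.symm]
  · rintro p (rfl | rfl | rfl) <;> simp

/-- Good paths with disjoint interiors are internally disjoint, unless both use the arc `(r, s)`. -/
theorem GoodPath.intDisj {D : Dgr V} {r s : V} {I J : Set V} {T U : Set (V × V)}
    (hT : GoodPath D r s I T) (hU : GoodPath D r s J U) (hIJ : ∀ v ∈ I, v ∉ J)
    (hd : (r, s) ∈ T → (r, s) ∉ U) : IntDisj {r, s} r T U := by
  obtain ⟨-, hTv, hrI, hsI, hTp⟩ := hT
  obtain ⟨-, hUv, -, -, hUp⟩ := hU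
  have hi : ∀ v ∈ I, v ∉ tverts U r := by
    intro v hv; rw [hUv]; rintro ((rfl | rfl) | h)
    exacts [hrI hv, hsI hv, hIJ v hv h]
  constructor
  · refine Set.eq_empty_of_forall_notMem ?_
    rintro ⟨u, v⟩ ⟨h1, h2⟩
    rcases hTp _ h1 with h | h | h
    · rw [h] at h1 h2; exact hd h1 h2
    · exact hi u h (.inl ⟨v, .inr h2⟩)
    · exact hi v h (.inl ⟨u, .inl h2⟩)
  · rw [hTv, hUv]; ext v
    have := hIJ v
    simp only [Set.mem_inter_iff, Set.mem_union]; grind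

/-! ### The family of trees -/

open Classical in
/-- If `D` is obtained from a complete digraph by deleting a partial injection `M`, the vertices
outside `{r, s}` index a family of pairwise internally disjoint `({r, s}, r)`-trees. -/
theorem exists_family {D : Dgr V} {M : Set (V × V)}
    (hout : ∀ u v w, (u, v) ∈ M → (u, w) ∈ M → v = w)
    (hin : ∀ u v w, (u, w) ∈ M → (v, w) ∈ M → u = v)
    (hD : ∀ u v, u ≠ v → (u, v) ∉ M → D.Adj u v) {r s : V} (hrs : r ≠ s) :
    ∃ T : V → Set (V × V), (∀ x, x ≠ r → x ≠ s → IsSRTree D {r, s} r (T x)) ∧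
      ∀ x y, x ≠ r → x ≠ s → y ≠ r → y ≠ s → x ≠ y → IntDisj {r, s} r (T x) (T y) := by
  suffices h : ∃ (I : V → Set V) (T : V → Set (V × V)),
      (∀ x, x ≠ r → x ≠ s → GoodPath D r s (I x) (T x)) ∧
      ∀ x y, x ≠ r → x ≠ s → y ≠ r → y ≠ s → x ≠ y →
        (∀ v ∈ I x, v ∉ I y) ∧ ((r, s) ∈ T x → (r, s) ∉ T y) by
    obtain ⟨I, T, h1, h2⟩ := h
    refine ⟨T, fun x hr hs => (h1 x hr hs).1, fun x y hxr hxs hyr hys hxy => ?_⟩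
    obtain ⟨h3, h4⟩ := h2 x y hxr hxs hyr hys hxy
    exact (h1 x hxr hxs).intDisj (h1 y hyr hys) h3 h4
  have hone : ∀ x, x ≠ r → x ≠ s → (r, x) ∉ M → (x, s) ∉ M →
      GoodPath D r s {x} {(r, x), (x, s)} := fun x hr hs h1 h2 =>
    .one hrs hr hs (hD _ _ hr.symm h1) (hD _ _ hs h2)
  by_cases hgood : ∀ x, x ≠ r → x ≠ s → (r, x) ∉ M ∧ (x, s) ∉ M
  · refine ⟨fun x => {x}, fun x => {(r, x), (x, s)},
      fun x hr hs => hone x hr hs (hgood x hr hs).1 (hgood x hr hs).2, ?_⟩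
    intro x y _ _ _ _ _
    simp only [Set.mem_insert_iff, Set.mem_singleton_iff, Prod.mk.injEq]
    grind
  have hrsM : (r, s) ∉ M := fun h => hgood fun x hr hs =>
    ⟨fun h' => hs (hout _ _ _ h' h), fun h' => hr (hin _ _ _ h' h)⟩
  by_cases hab : ∃ a b, a ≠ r ∧ a ≠ s ∧ b ≠ r ∧ b ≠ s ∧ a ≠ b ∧ (r, a) ∈ M ∧ (b, s) ∈ M
  · -- The index `a` carries the arc `r → s`, the index `b` the path `r → b → a → s`.
    obtain ⟨a, b, har, has, hbr, hbs, hne, ha, hb⟩ := hab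
    refine ⟨fun x => if x = a then ∅ else if x = b then {a, b} else {x},
      fun x => if x = a then {(r, s)} else if x = b then {(r, b), (b, a), (a, s)}
        else {(r, x), (x, s)}, ?_, ?_⟩
    · intro x hr hs
      dsimp only
      split_ifs with h1 h2
      · exact .direct hrs (hD _ _ hrs hrsM)
      · exact .two hrs har has hbr hbs hne
          (hD _ _ hbr.symm fun h => hne (hout _ _ _ ha h))
          (hD _ _ hne.symm fun h => has (hout _ _ _ h hb))
          (hD _ _ has fun h => hne (hin _ _ _ h hb))
      · exact hone x hr hs (fun h => h1 (hout _ _ _ h ha)) (fun h => h2 (hin _ _ _ h hb))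
    · intro x y _ _ _ _ _
      dsimp only
      split_ifs <;>
        simp only [Set.mem_insert_iff, Set.mem_singleton_iff, Prod.mk.injEq,
          Set.mem_empty_iff_false] <;> grind
  · -- Exactly one vertex `z` outside `{r, s}` is obstructed.
    obtain ⟨z, hzr, hzs, hz⟩ : ∃ z, z ≠ r ∧ z ≠ s ∧ ((r, z) ∈ M ∨ (z, s) ∈ M) := by
      push Not at hgood
      obtain ⟨z, h1, h2, h3⟩ := hgood
      exact ⟨z, h1, h2, by tauto⟩
    have huniq : ∀ x, x ≠ r → x ≠ s → x ≠ z → (r, x) ∉ M ∧ (x, s) ∉ M := by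
      intro x hr hs hxz
      refine ⟨fun h => ?_, fun h => ?_⟩
      · rcases hz with hz | hz
        · exact hxz (hout _ _ _ h hz)
        · exact hab ⟨x, z, hr, hs, hzr, hzs, hxz, h, hz⟩
      · rcases hz with hz | hz
        · exact hab ⟨z, x, hzr, hzs, hr, hs, hxz.symm, hz, h⟩
        · exact hxz (hin _ _ _ h hz)
    refine ⟨fun x => if x = z then ∅ else {x},
      fun x => if x = z then {(r, s)} else {(r, x), (x, s)}, ?_, ?_⟩
    · intro x hr hs
      dsimp only
      split_ifs with h1
      · exact .direct hrs (hD _ _ hrs hrsM)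
      · exact hone x hr hs (huniq x hr hs h1).1 (huniq x hr hs h1).2
    · intro x y _ _ _ _ _
      dsimp only
      split_ifs <;>
        simp only [Set.mem_insert_iff, Set.mem_singleton_iff, Prod.mk.injEq,
          Set.mem_empty_iff_false] <;> grind

/-! ### Cycle factors -/

theorem CycleFactorOn.partialInj {M : Set (V × V)} {W : Set V} (h : CycleFactorOn M W) :
    (∀ u v w, (u, v) ∈ M → (u, w) ∈ M → v = w) ∧
      ∀ u v w, (u, w) ∈ M → (v, w) ∈ M → u = v :=
  ⟨fun u _ _ h1 h2 => (h.2.1 u (h.1 _ h1).1).unique h1 h2,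
    fun _ _ w h1 h2 => (h.2.2 w (h.1 _ h1).2.1).unique h1 h2⟩

/-- if `n ≥ 3` and `D ∈ D_{n,1} ∪ D_{n,2}`, then for every
`S` with `|S| = 2` and every `r ∈ S`, `D` contains `n - 2` pairwise
internally disjoint `(S,r)`-trees. -/
theorem stmt_2 (n : ℕ) (hn : 3 ≤ n) (D : Dgr (Fin n))
    (hD : D ∈ D1 n ∪ D2 n) (S : Set (Fin n)) (hS : S.ncard = 2)
    (r : Fin n) (hr : r ∈ S) :
    ∃ f : Fin (n - 2) → Set (Fin n × Fin n),
      (∀ i, IsSRTree D S r (f i)) ∧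
      ∀ i j, i ≠ j → IntDisj S r (f i) (f j) := by
  obtain ⟨M, W, hM, rfl⟩ : ∃ M W, CycleFactorOn M W ∧ D = (completeD n).deleteArcs M := by
    rcases hD with ⟨M, hM, h⟩ | ⟨M, w, hM, h⟩
    exacts [⟨M, _, hM, h⟩, ⟨M, _, hM, h⟩]
  obtain ⟨s, hrs, rfl⟩ : ∃ s, r ≠ s ∧ S = {r, s} := by
    obtain ⟨x, y, hxy, rfl⟩ := Set.ncard_eq_two.1 hS
    rcases hr with rfl | rfl
    · exact ⟨y, hxy, rfl⟩
    · exact ⟨x, hxy.symm, Set.pair_comm _ _⟩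
  obtain ⟨T, hT, hTT⟩ := exists_family hM.partialInj.1 hM.partialInj.2
    (D := (completeD n).deleteArcs M) (fun u v huv h => ⟨huv, h⟩) hrs
  have hcard : (({r, s} : Finset (Fin n))ᶜ).card = n - 2 := by
    rw [Finset.card_compl, Finset.card_pair hrs, Fintype.card_fin]
  let e := (({r, s} : Finset (Fin n))ᶜ).equivFinOfCardEq hcard |>.symm
  have he : ∀ i, (e i : Fin n) ≠ r ∧ (e i : Fin n) ≠ s := fun i => by
    simpa using (e i).2
  refine ⟨fun i => T (e i), fun i => hT _ (he i).1 (he i).2, fun i j hij => ?_⟩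
  exact hTT _ _ (he i).1 (he i).2 (he j).1 (he j).2
    fun h => hij (e.injective (Subtype.ext h))

end TreeConn
end

section
/- Let D be a digraph of order n and let k be an integer with 2 ≤ k ≤ n. Then D is minimally generalized (k, n−1)-vertex-strongly connected if and only if D is isomorphic to the complete digraph ↔K_n; likewise, D is minimally generalized (k, n−1)-arc-strongly connected if and only if D is isomorphic to ↔K_n. -/
/-!
In a family of arc-disjoint `(S,r)`-trees with `|S| ≥ 2`, each tree uses its own arc leaving `r`,
so `κ_k(D) ≤ λ_k(D) ≤ d⁺(r)` for every vertex `r` (`kappaK_le_lambdaK`, `lambdaK_le_outdeg`).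
In `↔K_n` the `n - 1` trees `r → v → S \ {r, v}`, one for each `v ≠ r`, are pairwise internally
disjoint, so `κ_k(↔K_n) ≥ n - 1` (`le_kappaK_of_complete`).

Hence `κ_k(D) ≥ n - 1` or `λ_k(D) ≥ n - 1` forces every out-degree to be `n - 1`, that is,
`D = ↔K_n`; conversely, deleting the arc `uv` from `↔K_n` leaves `u` with out-degree `n - 2`, so
both parameters drop below `n - 1`.
-/

/-!
Formalization of directed tree connectivity (Sun, "Extremal results for
directed tree connectivity").

A digraph (no loops, no parallel arcs) on a vertex type `V` is given by an
irreflexive adjacency relation.  Out-trees, `(S,r)`-trees, the parameters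
`κ_k`, `λ_k`, minimally generalized `(k,ℓ)`-vertex/arc-strongly connected
digraphs, the families `D_{n,1}`, `D_{n,2}` and the extremal functions
`f, g, F, G` are defined below.
-/

namespace TreeConn

variable {V : Type}

theorem exists_ncard_eq {n k : ℕ} (hk : 2 ≤ k) (hkn : k ≤ n) (r : Fin n) :
    ∃ S : Set (Fin n), r ∈ S ∧ S.ncard = k := by
  obtain ⟨S, h1, -, h3⟩ := Finset.exists_subsuperset_card_eq
    (s := {r}) (t := Finset.univ) (n := k) (Finset.subset_univ _) (by simp; omega) (by simpa)
  exact ⟨S, by simpa using h1, by simpa using h3⟩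

/-- Arc-disjoint `(S,r)`-trees leave `r` through distinct arcs. -/
theorem le_outdeg_of_arcDisj {n m : ℕ} {D : Dgr (Fin n)} {S : Set (Fin n)} {r : Fin n}
    (hS : 2 ≤ S.ncard) (f : Fin m → Set (Fin n × Fin n)) (hf : ∀ i, IsSRTree D S r (f i))
    (hd : ∀ i j, i ≠ j → ArcDisj (f i) (f j)) : m ≤ {v | D.Adj r v}.ncard := by
  obtain ⟨s, hs, hsr⟩ := Set.exists_ne_of_one_lt_ncard (by omega : 1 < S.ncard) r
  have key : ∀ i, ∃ v, (r, v) ∈ f i := by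
    intro i
    obtain ⟨-, ⟨hreach, -, -⟩, hsub⟩ := hf i
    have hsv : s ∈ averts (f i) := (hsub hs).resolve_right hsr
    rcases (hreach s hsv).cases_head with h | ⟨v, hv, -⟩
    · exact absurd h.symm hsr
    · exact ⟨v, hv⟩
  choose g hg using key
  have hinj : Function.Injective g := by
    intro i j hij
    by_contra hne
    have hmem : (r, g i) ∈ f i ∩ f j := ⟨hg i, by rw [hij]; exact hg j⟩
    rw [hd i j hne] at hmem
    exact hmem
  have hrange : Set.range g ⊆ {v | D.Adj r v} := by
    rintro _ ⟨i, rfl⟩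
    exact (hf i).1 (hg i)
  calc m = (Set.range g).ncard := by simp [Set.ncard_range_of_injective hinj]
    _ ≤ _ := Set.ncard_le_ncard hrange

theorem lambdaSr_le_outdeg {n : ℕ} (D : Dgr (Fin n)) {S : Set (Fin n)} (r : Fin n)
    (hS : 2 ≤ S.ncard) : lambdaSr D S r ≤ {v | D.Adj r v}.ncard := by
  refine csSup_le ⟨0, fun i => i.elim0, fun i => i.elim0, fun i => i.elim0⟩ ?_
  rintro _ ⟨f, hf, hd⟩
  exact le_outdeg_of_arcDisj hS f hf hd

theorem kappaSr_le_lambdaSr {n : ℕ} (D : Dgr (Fin n)) {S : Set (Fin n)} (r : Fin n)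
    (hS : 2 ≤ S.ncard) : kappaSr D S r ≤ lambdaSr D S r := by
  refine csSup_le_csSup ⟨{v | D.Adj r v}.ncard, ?_⟩
    ⟨0, fun i => i.elim0, fun i => i.elim0, fun i => i.elim0⟩ ?_
  · rintro _ ⟨f, hf, hd⟩
    exact le_outdeg_of_arcDisj hS f hf hd
  · rintro _ ⟨f, hf, hd⟩
    exact ⟨f, hf, fun i j hij => (hd i j hij).1⟩

theorem lambdaK_le_outdeg {n k : ℕ} (hk : 2 ≤ k) (hkn : k ≤ n) (D : Dgr (Fin n)) (r : Fin n) :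
    lambdaK D k ≤ {v | D.Adj r v}.ncard := by
  obtain ⟨S, hr, hS⟩ := exists_ncard_eq hk hkn r
  exact le_trans (Nat.sInf_le ⟨S, r, hr, hS, rfl⟩) (lambdaSr_le_outdeg D r (hS ▸ hk))

theorem kappaK_le_lambdaK {n k : ℕ} (hk : 2 ≤ k) (hkn : k ≤ n) (D : Dgr (Fin n)) :
    kappaK D k ≤ lambdaK D k := by
  obtain ⟨S, hr, hS⟩ := exists_ncard_eq hk hkn ⟨0, by omega⟩
  refine le_csInf ⟨_, S, _, hr, hS, rfl⟩ ?_
  rintro _ ⟨S', r', hr', hS', rfl⟩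
  exact le_trans (Nat.sInf_le ⟨S', r', hr', hS', rfl⟩) (kappaSr_le_lambdaSr D r' (hS' ▸ hk))

/-- The arc set of the tree `r → v → S \ {r, v}`; the case `v ∈ S` is allowed. -/
def broom (S : Set V) (r v : V) : Set (V × V) :=
  {p | p = (r, v) ∨ p.1 = v ∧ p.2 ∈ S ∧ p.2 ≠ r ∧ p.2 ≠ v}

theorem mem_tverts_broom {S : Set V} {r v : V} (hr : r ∈ S) (x : V) :
    x ∈ tverts (broom S r v) r ↔ x ∈ S ∨ x = v := by
  constructor
  · rintro (⟨u, h | h⟩ | h)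
    · rcases h with h | h
      · exact Or.inr (Prod.ext_iff.1 h).2
      · exact Or.inl h.2.1
    · rcases h with h | h
      · exact Or.inl (by rwa [show x = r from (Prod.ext_iff.1 h).1])
      · exact Or.inr h.1
    · exact Or.inl (h ▸ hr)
  · intro h
    by_cases hxr : x = r
    · exact Or.inr hxr
    by_cases hxv : x = v
    · exact Or.inl ⟨r, Or.inl (Or.inl (by rw [hxv]))⟩
    · exact Or.inl ⟨v, Or.inl (Or.inr ⟨rfl, h.resolve_right hxv, hxr, hxv⟩)⟩

theorem isOutTree_broom {S : Set V} {r v : V} (hr : r ∈ S) (hv : v ≠ r) :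
    IsOutTree (broom S r v) r := by
  have hrv : (r, v) ∈ broom S r v := Or.inl rfl
  refine ⟨?_, ?_, ?_⟩
  · intro x hx
    have hx' := (mem_tverts_broom hr x).1 (Or.inl hx)
    by_cases hxr : x = r
    · rw [hxr]
    by_cases hxv : x = v
    · rw [hxv]
      exact Relation.ReflTransGen.single hrv
    · have hvx : (v, x) ∈ broom S r v := Or.inr ⟨rfl, hx'.resolve_right hxv, hxr, hxv⟩
      exact Relation.ReflTransGen.tail (b := v) (Relation.ReflTransGen.single hrv) hvx
  · rintro p (rfl | h)
    · exact hv
    · exact h.2.2.1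
  · intro x hx hxr
    have hx' := (mem_tverts_broom hr x).1 (Or.inl hx)
    by_cases hxv : x = v
    · subst hxv
      refine ⟨r, hrv, ?_⟩
      rintro u (h | h)
      · exact (Prod.ext_iff.1 h).1
      · exact absurd rfl h.2.2.2
    · refine ⟨v, Or.inr ⟨rfl, hx'.resolve_right hxv, hxr, hxv⟩, ?_⟩
      rintro u (h | h)
      · exact absurd (Prod.ext_iff.1 h).2 hxv
      · exact h.1

theorem intDisj_broom {S : Set V} {r v w : V} (hr : r ∈ S) (hv : v ≠ r) (hw : w ≠ r)
    (hvw : v ≠ w) : IntDisj S r (broom S r v) (broom S r w) := by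
  constructor
  · refine Set.eq_empty_of_forall_notMem ?_
    rintro ⟨a, b⟩ ⟨h1, h2⟩
    simp only [broom, Set.mem_ofPred_eq, Prod.mk.injEq] at h1 h2
    grind
  · ext x
    rw [Set.mem_inter_iff, mem_tverts_broom hr, mem_tverts_broom hr]
    grind

theorem le_kappaK_of_complete {n k : ℕ} (hk : 2 ≤ k) (hkn : k ≤ n) {D : Dgr (Fin n)}
    (hD : ∀ u v, D.Adj u v ↔ u ≠ v) : n - 1 ≤ kappaK D k := by
  obtain ⟨S₀, hr₀, hS₀⟩ := exists_ncard_eq hk hkn ⟨0, by omega⟩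
  refine le_csInf ⟨_, S₀, _, hr₀, hS₀, rfl⟩ ?_
  rintro _ ⟨S, r, hr, hS, rfl⟩
  have hcard : Fintype.card {v : Fin n // v ≠ r} = n - 1 := by
    simp [Fintype.card_subtype_compl]
  let g := (Fintype.equivFinOfCardEq hcard).symm
  have hbdd : ∀ m ∈ {m | ∃ f : Fin m → Set (Fin n × Fin n), (∀ i, IsSRTree D S r (f i)) ∧
      ∀ i j, i ≠ j → IntDisj S r (f i) (f j)}, m ≤ {v | D.Adj r v}.ncard := by
    rintro _ ⟨f, hf, hd⟩
    exact le_outdeg_of_arcDisj (hS ▸ hk) f hf fun i j hij => (hd i j hij).1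
  refine le_csSup ⟨_, hbdd⟩ ⟨fun i => broom S r (g i), fun i => ⟨?_, ?_, ?_⟩, ?_⟩
  · rintro ⟨a, b⟩ (h : (a, b) ∈ broom S r (g i))
    refine (hD a b).2 ?_
    rcases h with h | h
    · obtain ⟨h1, h2⟩ := Prod.mk.inj h
      rw [h1, h2]
      exact (g i).2.symm
    · exact fun hab => h.2.2.2 (hab.symm.trans h.1)
  · exact isOutTree_broom hr (g i).2
  · exact fun x hx => (mem_tverts_broom hr x).2 (Or.inl hx)
  · exact fun i j hij => intDisj_broom hr (g i).2 (g j).2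
      fun h => hij (g.injective (Subtype.ext h))

theorem complete_of_le_lambdaK {n k : ℕ} (hk : 2 ≤ k) (hkn : k ≤ n) {D : Dgr (Fin n)}
    (h : n - 1 ≤ lambdaK D k) (u v : Fin n) : D.Adj u v ↔ u ≠ v := by
  refine ⟨fun huv e => D.loopless v (e ▸ huv), fun huv => ?_⟩
  have hle := h.trans (lambdaK_le_outdeg hk hkn D u)
  have hsub : {w | D.Adj u w} ⊆ ({u}ᶜ : Set (Fin n)) :=
    fun w hw e => D.loopless u (by rwa [Set.mem_singleton_iff.1 e] at hw)
  have heq := Set.eq_of_subset_of_ncard_le hsub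
    (by rwa [Set.ncard_compl, Set.ncard_singleton, Nat.card_fin])
  have hv : v ∈ ({u}ᶜ : Set (Fin n)) := fun e => huv e.symm
  rwa [← heq] at hv

theorem lambdaK_deleteArc_le {n k : ℕ} (hk : 2 ≤ k) (hkn : k ≤ n) (D : Dgr (Fin n))
    (e : Fin n × Fin n) (he : e ∈ D.Arcs) : lambdaK (D.deleteArc e) k ≤ n - 1 - 1 := by
  refine (lambdaK_le_outdeg hk hkn _ e.1).trans ?_
  have hne : e.1 ≠ e.2 := fun h => D.loopless e.1 (by
    have he' : D.Adj e.1 e.2 := he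
    rwa [← h] at he')
  have hsub : {v | (D.deleteArc e).Adj e.1 v} ⊆ ({e.1, e.2}ᶜ : Set (Fin n)) := by
    rintro w ⟨hw, hw'⟩ (rfl | rfl)
    · exact D.loopless _ hw
    · exact hw' rfl
  have := Set.ncard_le_ncard hsub
  rw [Set.ncard_compl, Set.ncard_pair hne, Nat.card_fin] at this
  omega

/-- for `2 ≤ k ≤ n`, `D` is minimally generalized
`(k, n-1)`-vertex-strongly connected iff `D ≅ ↔K_n`, and likewise for
the arc version. -/
theorem stmt_5 (n k : ℕ) (hk : 2 ≤ k) (hkn : k ≤ n) (D : Dgr (Fin n)) :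
    (MinVSC D k (n - 1) ↔
      ∃ e : Fin n ≃ Fin n, ∀ u v, D.Adj u v ↔ (completeD n).Adj (e u) (e v)) ∧
    (MinASC D k (n - 1) ↔
      ∃ e : Fin n ≃ Fin n, ∀ u v, D.Adj u v ↔ (completeD n).Adj (e u) (e v)) := by
  have hiso : (∃ e : Fin n ≃ Fin n, ∀ u v, D.Adj u v ↔ (completeD n).Adj (e u) (e v)) ↔
      ∀ u v, D.Adj u v ↔ u ≠ v :=
    ⟨fun ⟨e, he⟩ u v => (he u v).trans e.injective.ne_iff, fun h => ⟨Equiv.refl _, h⟩⟩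
  rw [hiso]
  refine ⟨⟨fun h => ?_, fun h => ⟨?_, fun e he => ?_⟩⟩, ⟨fun h => ?_, fun h => ⟨?_, ?_⟩⟩⟩
  · exact complete_of_le_lambdaK hk hkn (h.1.trans (kappaK_le_lambdaK hk hkn D))
  · exact le_kappaK_of_complete hk hkn h
  · exact (kappaK_le_lambdaK hk hkn _).trans (lambdaK_deleteArc_le hk hkn D e he)
  · exact complete_of_le_lambdaK hk hkn h.1
  · exact (le_kappaK_of_complete hk hkn h).trans (kappaK_le_lambdaK hk hkn D)
  · exact lambdaK_deleteArc_le hk hkn D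

end TreeConn
end

section
/- Let n ≥ 3 and let k be an integer with 2 ≤ k ≤ n. A digraph D of order n is minimally generalized (k, n−2)-arc-strongly connected if and only if D ∈ D_{n,1} ∪ D_{n,2}. -/
/-!
The proof compares `λ_k(D) ≥ n - 2` with a degree condition. Call `D` nearly complete if every
vertex misses at most one out-arc and at most one in-arc. Then `λ_k(D) ≥ n - 2` holds exactly when
`D` is nearly complete (`le_lambdaK_iff`).

Necessity: arc-disjoint `(S,r)`-trees use distinct arcs out of `r` and distinct arcs into any other
vertex of `S`, and each vertex can play either role since `k ≥ 2`.

Sufficiency: the missing arcs form a partial injection, which extends to a permutation `σ`. In the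
complete digraph the trees `r → u`, `u → x` (`x ≠ r, u`), for `u ≠ r`, are arc-disjoint. Fix `d ≠ r`
with `d = σ r` unless `σ r = r`, drop the tree of `d`, and use its arcs to repair the others: in the
tree of `u` the arc `u → σ u` is replaced by `d → σ u`, or by `r → d` if `σ u = d`. This gives
`n - 2` arc-disjoint spanning out-trees (`parentTree`), whatever `S` is.

Consequently the minimal digraphs are the nearly complete ones whose partial injection of missing
arcs is maximal among the loopless ones. Maximality says that a vertex missing no out-arc equals
any vertex missing no in-arc (`eq_of_minimal`), so the missing arcs are a fixed-point-free
permutation of all vertices or of all vertices but one.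
-/


/-!
Formalization of directed tree connectivity (Sun, "Extremal results for
directed tree connectivity").

A digraph (no loops, no parallel arcs) on a vertex type `V` is given by an
irreflexive adjacency relation.  Out-trees, `(S,r)`-trees, the parameters
`κ_k`, `λ_k`, minimally generalized `(k,ℓ)`-vertex/arc-strongly connected
digraphs, the families `D_{n,1}`, `D_{n,2}` and the extremal functions
`f, g, F, G` are defined below.
-/

namespace TreeConn

variable {V : Type}

/-- Every vertex of `D` misses at most one out-arc and at most one in-arc. -/
def NearComplete (D : Dgr V) : Prop :=
  (∀ u v w, u ≠ v → u ≠ w → ¬ D.Adj u v → ¬ D.Adj u w → v = w) ∧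
  (∀ u v w, v ≠ u → w ≠ u → ¬ D.Adj v u → ¬ D.Adj w u → v = w)

/-! ### Bounds on the number of arc-disjoint trees -/

lemma exists_in_arc {D : Dgr V} {S : Set V} {r s : V} {T : Set (V × V)}
    (hT : IsSRTree D S r T) (hs : s ∈ S) (hsr : s ≠ r) : ∃ u, (u, s) ∈ T := by
  rcases hT.2.2 hs with h | h
  · exact (hT.2.1.2.2 s h hsr).exists
  · exact absurd h hsr

lemma exists_out_arc {D : Dgr V} {S : Set V} {r s : V} {T : Set (V × V)}
    (hT : IsSRTree D S r T) (hs : s ∈ S) (hsr : s ≠ r) : ∃ u, (r, u) ∈ T := by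
  rcases hT.2.2 hs with h | h
  · rcases Relation.ReflTransGen.cases_head (hT.2.1.1 s h) with h | ⟨c, hc, -⟩
    · exact absurd h.symm hsr
    · exact ⟨c, hc⟩
  · exact absurd h hsr

/-- Arc-disjoint trees leave the root along distinct arcs. -/
lemma exists_out_injective {D : Dgr V} {S : Set V} {r s : V} {m : ℕ}
    {f : Fin m → Set (V × V)} (hf : ∀ i, IsSRTree D S r (f i))
    (hd : ∀ i j, i ≠ j → ArcDisj (f i) (f j)) (hs : s ∈ S) (hsr : s ≠ r) :
    ∃ g : Fin m → V, Function.Injective g ∧ ∀ i, D.Adj r (g i) := by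
  choose g hg using fun i => exists_out_arc (hf i) hs hsr
  refine ⟨g, fun i j hij => ?_, fun i => (hf i).1 (hg i)⟩
  by_contra hne
  have : (r, g i) ∈ f i ∩ f j := ⟨hg i, hij ▸ hg j⟩
  rw [hd i j hne] at this
  exact this

/-- Arc-disjoint trees enter a non-root terminal along distinct arcs. -/
lemma exists_in_injective {D : Dgr V} {S : Set V} {r s : V} {m : ℕ}
    {f : Fin m → Set (V × V)} (hf : ∀ i, IsSRTree D S r (f i))
    (hd : ∀ i j, i ≠ j → ArcDisj (f i) (f j)) (hs : s ∈ S) (hsr : s ≠ r) :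
    ∃ g : Fin m → V, Function.Injective g ∧ ∀ i, D.Adj (g i) s := by
  choose g hg using fun i => exists_in_arc (hf i) hs hsr
  refine ⟨g, fun i j hij => ?_, fun i => (hf i).1 (hg i)⟩
  by_contra hne
  have : (g i, s) ∈ f i ∩ f j := ⟨hg i, hij ▸ hg j⟩
  rw [hd i j hne] at this
  exact this

/-- The set of sizes whose supremum is `lambdaSr` is bounded as soon as `S` has a vertex other
than the root, so that supremum is an honest maximum. -/
lemma bddAbove_family [Fintype V] {D : Dgr V} {S : Set V} {r s : V} (hs : s ∈ S)
    (hsr : s ≠ r) :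
    BddAbove {m | ∃ f : Fin m → Set (V × V), (∀ i, IsSRTree D S r (f i)) ∧
      ∀ i j, i ≠ j → ArcDisj (f i) (f j)} := by
  refine ⟨Fintype.card V, ?_⟩
  rintro m ⟨f, hf, hd⟩
  obtain ⟨g, hg, -⟩ := exists_out_injective hf hd hs hsr
  simpa using Fintype.card_le_of_injective g hg

lemma exists_family_of_le_lambdaK [Fintype V] {D : Dgr V} {k ℓ : ℕ} (h : ℓ ≤ lambdaK D k)
    {S : Set V} {r s : V} (hr : r ∈ S) (hs : s ∈ S) (hsr : s ≠ r) (hS : S.ncard = k) :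
    ∃ f : Fin ℓ → Set (V × V), (∀ i, IsSRTree D S r (f i)) ∧
      ∀ i j, i ≠ j → ArcDisj (f i) (f j) := by
  have h1 : ℓ ≤ lambdaSr D S r := h.trans (Nat.sInf_le ⟨S, r, hr, hS, rfl⟩)
  obtain ⟨f, hf, hd⟩ := Nat.sSup_mem
    (s := {m | ∃ f : Fin m → Set (V × V), (∀ i, IsSRTree D S r (f i)) ∧
      ∀ i j, i ≠ j → ArcDisj (f i) (f j)})
    ⟨0, fun i => i.elim0, fun i => i.elim0, fun i => i.elim0⟩ (bddAbove_family hs hsr)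
  refine ⟨fun i => f (Fin.castLE h1 i), fun i => hf _, fun i j hij => hd _ _ ?_⟩
  exact fun e => hij (Fin.castLE_injective h1 e)

lemma exists_terminal_set {n k : ℕ} (hk : 2 ≤ k) (hkn : k ≤ n) {u v : Fin n} (huv : u ≠ v) :
    ∃ S : Set (Fin n), u ∈ S ∧ v ∈ S ∧ S.ncard = k := by
  obtain ⟨t, hst, -, ht⟩ := Finset.exists_subsuperset_card_eq
    (Finset.subset_univ ({u, v} : Finset (Fin n))) (n := k)
    (by rw [Finset.card_pair huv]; exact hk) (by simpa using hkn)
  exact ⟨t, hst (by simp), hst (by simp), by simpa using ht⟩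

lemma no_injective_avoiding {n : ℕ} (hn : 3 ≤ n) {u v w : Fin n} (huv : u ≠ v) (huw : u ≠ w)
    (hvw : v ≠ w) (g : Fin (n - 2) → Fin n) (hg : Function.Injective g)
    (hu : ∀ i, g i ≠ u) (hv : ∀ i, g i ≠ v) (hw : ∀ i, g i ≠ w) : False := by
  have h1 : Finset.univ.image g ⊆ (Finset.univ \ {u, v, w} : Finset (Fin n)) := by
    intro x hx
    obtain ⟨i, -, rfl⟩ := Finset.mem_image.1 hx
    simp [hu i, hv i, hw i]
  have h2 := Finset.card_le_card h1
  rw [Finset.card_image_of_injective _ hg, Finset.card_sdiff_of_subset (Finset.subset_univ _),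
    Finset.card_eq_three.2 ⟨u, v, w, huv, huw, hvw, rfl⟩] at h2
  simp at h2
  omega

lemma nearComplete_of_le {n k : ℕ} (hn : 3 ≤ n) (hk : 2 ≤ k) (hkn : k ≤ n)
    {D : Dgr (Fin n)} (h : n - 2 ≤ lambdaK D k) : NearComplete D := by
  constructor
  · intro u v w huv huw hv hw
    by_contra hvw
    obtain ⟨S, hu, hvS, hS⟩ := exists_terminal_set hk hkn huv
    obtain ⟨f, hf, hd⟩ := exists_family_of_le_lambdaK h hu hvS huv.symm hS
    obtain ⟨g, hg, ha⟩ := exists_out_injective hf hd hvS huv.symm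
    exact no_injective_avoiding hn huv huw hvw g hg
      (fun i e => D.loopless u (by simpa [e] using ha i))
      (fun i e => hv (by simpa [e] using ha i)) (fun i e => hw (by simpa [e] using ha i))
  · intro u v w huv huw hv hw
    by_contra hvw
    obtain ⟨S, hu, hvS, hS⟩ := exists_terminal_set hk hkn huv.symm
    obtain ⟨f, hf, hd⟩ := exists_family_of_le_lambdaK h hvS hu huv.symm hS
    obtain ⟨g, hg, ha⟩ := exists_in_injective hf hd hu huv.symm
    exact no_injective_avoiding hn huv.symm huw.symm hvw g hg
      (fun i e => D.loopless u (by simpa [e] using ha i))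
      (fun i e => hv (by simpa [e] using ha i)) (fun i e => hw (by simpa [e] using ha i))

/-! ### Packing out-branchings in a nearly complete digraph -/

/-- The missing arcs of a nearly complete digraph form a partial injection, which extends to a
permutation. -/
lemma NearComplete.exists_perm [Fintype V] {D : Dgr V} (h : NearComplete D) :
    ∃ σ : Equiv.Perm V, ∀ u v, u ≠ v → ¬ D.Adj u v → σ u = v := by
  classical
  let s : Set V := {u | ∃ v, u ≠ v ∧ ¬ D.Adj u v}
  let f : V → V := fun u => if hu : ∃ v, u ≠ v ∧ ¬ D.Adj u v then hu.choose else u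
  have hf : ∀ u ∈ s, u ≠ f u ∧ ¬ D.Adj u (f u) := by
    intro u hu
    have e : f u = Exists.choose hu := dif_pos hu
    rw [e]
    exact Exists.choose_spec hu
  have hinj : Set.InjOn f s := by
    intro a ha b hb hab
    have h1 := hf a ha
    have h2 := hf b hb
    rw [hab] at h1
    exact h.2 _ _ _ h1.1 h2.1 h1.2 h2.2
  obtain ⟨g, hg⟩ := Set.MapsTo.exists_equiv_extend_of_card_eq (t := (Finset.univ : Finset V))
    (by simp) (s := s) (f := f) (fun _ _ => by simp) hinj
  refine ⟨g.trans (Equiv.subtypeUnivEquiv (by simp)), fun u v huv hadj => ?_⟩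
  have hu : u ∈ s := ⟨v, huv, hadj⟩
  have e : f u = v := h.1 _ _ _ (hf u hu).1 huv (hf u hu).2 hadj
  simp [Equiv.subtypeUnivEquiv, hg u hu, e]

open Classical in
/-- The parent function of the `u`-th out-branching: `u` hangs from the root `r`, and every other
vertex from `u`, except that the possibly missing arc from `u` to `σ u` is replaced by an arc from
the auxiliary vertex `d`, or from `r` when `σ u = d`. -/
noncomputable def parent (σ : Equiv.Perm V) (r d u x : V) : V :=
  if x = u then r else if x = σ u then (if x = d then r else d) else u

/-- The arc set of the `u`-th out-branching. -/
def parentTree (σ : Equiv.Perm V) (r d u : V) : Set (V × V) :=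
  {p | p.2 ≠ r ∧ p.1 = parent σ r d u p.2}

lemma reach_parentTree {σ : Equiv.Perm V} {r d u : V} (hdr : d ≠ r) (hur : u ≠ r) (hud : u ≠ d)
    (x : V) : Relation.ReflTransGen (fun a b => (a, b) ∈ parentTree σ r d u) r x := by
  have hu : Relation.ReflTransGen (fun a b => (a, b) ∈ parentTree σ r d u) r u :=
    .single ⟨hur, by simp [parent]⟩
  have hd : Relation.ReflTransGen (fun a b => (a, b) ∈ parentTree σ r d u) r d := by
    by_cases e : d = σ u
    · exact .single ⟨hdr, by simp [parent, hud.symm, ← e]⟩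
    · exact hu.tail ⟨hdr, by simp [parent, hud.symm, e]⟩
  by_cases hxr : x = r
  · rw [hxr]
  by_cases hxu : x = u
  · rwa [hxu]
  by_cases hxd : x = d
  · rwa [hxd]
  by_cases e : x = σ u
  · exact hd.tail ⟨hxr, by simp only [parent, if_neg hxu, if_pos e, if_neg hxd]⟩
  · exact hu.tail ⟨hxr, by simp only [parent, if_neg hxu, if_neg e]⟩

lemma isSRTree_parentTree {D : Dgr V} {σ : Equiv.Perm V}
    (hσ : ∀ u v, u ≠ v → ¬ D.Adj u v → σ u = v) (S : Set V) {r d u : V} (hdr : d ≠ r)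
    (hd : σ r = r ∨ σ r = d) (hur : u ≠ r) (hud : u ≠ d) :
    IsSRTree D S r (parentTree σ r d u) := by
  refine ⟨?_, ⟨fun v _ => reach_parentTree hdr hur hud v, fun p hp => hp.1, fun v _ hvr =>
    ⟨parent σ r d u v, ⟨hvr, rfl⟩, fun y hy => hy.2⟩⟩, fun x _ => ?_⟩
  · rintro ⟨a, x⟩ ⟨hxr, ha⟩
    dsimp only at hxr ha
    change D.Adj a x
    by_contra hadj
    by_cases hxu : x = u
    · rw [parent, if_pos hxu] at ha
      subst ha hxu
      have := hσ _ _ hur.symm hadj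
      rcases hd with h | h
      · exact hur (this.symm.trans h)
      · exact hud (this.symm.trans h)
    by_cases e : x = σ u
    · by_cases hxd : x = d
      · rw [parent, if_neg hxu, if_pos e, if_pos hxd] at ha
        subst ha
        exact hur (σ.injective ((hσ _ _ (Ne.symm hxr) hadj).trans e).symm)
      · rw [parent, if_neg hxu, if_pos e, if_neg hxd] at ha
        subst ha
        exact hud (σ.injective ((hσ _ _ (Ne.symm hxd) hadj).trans e).symm)
    · rw [parent, if_neg hxu, if_neg e] at ha
      subst ha
      exact e (hσ _ _ (Ne.symm hxu) hadj).symm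
  · by_cases hxr : x = r
    · exact Or.inr hxr
    · exact Or.inl ⟨parent σ r d u x, Or.inl ⟨hxr, rfl⟩⟩

/-- Distinct indices give distinct parents to every non-root vertex. -/
lemma arcDisj_parentTree {σ : Equiv.Perm V} {r d u v : V}
    (hur : u ≠ r) (hud : u ≠ d) (hvr : v ≠ r) (hvd : v ≠ d) (hdr : d ≠ r) (huv : u ≠ v) :
    ArcDisj (parentTree σ r d u) (parentTree σ r d v) := by
  refine Set.eq_empty_of_forall_notMem ?_
  rintro ⟨a, x⟩ ⟨⟨hxr, h1⟩, ⟨-, h2⟩⟩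
  have h3 : σ u ≠ σ v := fun h => huv (σ.injective h)
  dsimp only at hxr h1 h2
  unfold parent at h1 h2
  grind

lemma le_lambdaK_of_nearComplete {n k : ℕ} (hk : 2 ≤ k) (hkn : k ≤ n)
    {D : Dgr (Fin n)} (h : NearComplete D) : n - 2 ≤ lambdaK D k := by
  obtain ⟨σ, hσ⟩ := h.exists_perm
  have hne : {m | ∃ S : Set (Fin n), ∃ r ∈ S, S.ncard = k ∧ m = lambdaSr D S r}.Nonempty := by
    obtain ⟨S, h0, -, hS⟩ := exists_terminal_set hk hkn
      (u := (⟨0, by omega⟩ : Fin n)) (v := ⟨1, by omega⟩) (by simp)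
    exact ⟨_, S, _, h0, hS, rfl⟩
  refine le_csInf hne ?_
  rintro m ⟨S, r, hr, hS, rfl⟩
  obtain ⟨s, hs, hsr⟩ := Set.exists_ne_of_one_lt_ncard (by omega : 1 < S.ncard) r
  -- If the arc from `r` to `σ r` is missing, the index `σ r` cannot be used, so take `d = σ r`.
  obtain ⟨d, hdr, hd⟩ : ∃ d, d ≠ r ∧ (σ r = r ∨ σ r = d) := by
    by_cases e : σ r = r
    · exact ⟨s, hsr, Or.inl e⟩
    · exact ⟨σ r, e, Or.inr rfl⟩
  have hcard : (Finset.univ \ {r, d} : Finset (Fin n)).card = n - 2 := by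
    rw [Finset.card_sdiff_of_subset (Finset.subset_univ _), Finset.card_pair hdr.symm]
    simp
  let c := (Finset.univ \ {r, d} : Finset (Fin n)).orderEmbOfFin hcard
  have hc : ∀ i, c i ≠ r ∧ c i ≠ d := by
    intro i
    have := (Finset.mem_sdiff.1 (Finset.orderEmbOfFin_mem _ hcard i)).2
    rwa [Finset.mem_insert, Finset.mem_singleton, not_or] at this
  refine le_csSup (bddAbove_family hs hsr) ⟨fun i => parentTree σ r d (c i), fun i =>
    isSRTree_parentTree hσ S hdr hd (hc i).1 (hc i).2, fun i j hij =>
    arcDisj_parentTree (hc i).1 (hc i).2 (hc j).1 (hc j).2 hdr fun e => hij (c.injective e)⟩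

lemma le_lambdaK_iff {n k : ℕ} (hn : 3 ≤ n) (hk : 2 ≤ k) (hkn : k ≤ n) (D : Dgr (Fin n)) :
    n - 2 ≤ lambdaK D k ↔ NearComplete D :=
  ⟨nearComplete_of_le hn hk hkn, le_lambdaK_of_nearComplete hk hkn⟩

/-! ### Arc-minimal nearly complete digraphs -/

/-- Deleting a cycle factor of `W` gives an arc-minimal nearly complete digraph when `W` misses at
most one vertex; the last condition is stated as: of two distinct vertices one lies in `W`. -/
lemma minimal_of_cycleFactorOn {n : ℕ} {M : Set (Fin n × Fin n)} {W : Set (Fin n)}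
    (hM : CycleFactorOn M W) (hW : ∀ u v, u ≠ v → u ∈ W ∨ v ∈ W) :
    NearComplete ((completeD n).deleteArcs M) ∧
      ∀ e ∈ ((completeD n).deleteArcs M).Arcs,
        ¬ NearComplete (((completeD n).deleteArcs M).deleteArc e) := by
  obtain ⟨h1, h2, h3⟩ := hM
  have key : ∀ u v, u ≠ v → ¬ ((completeD n).deleteArcs M).Adj u v → (u, v) ∈ M := by
    intro u v huv h
    by_contra hm
    exact h ⟨huv, hm⟩
  refine ⟨⟨fun u v w huv huw hv hw => ?_, fun u v w huv huw hv hw => ?_⟩, ?_⟩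
  · have a := key _ _ huv hv
    exact (h2 u (h1 _ a).1).unique a (key _ _ huw hw)
  · have a := key _ _ huv hv
    exact (h3 u (h1 _ a).2.1).unique a (key _ _ huw hw)
  · rintro ⟨u, v⟩ ⟨huv, hm⟩ hG
    rcases hW u v huv with h | h
    · obtain ⟨x, hx, -⟩ := h2 u h
      have : v = x := hG.1 u v x huv (h1 _ hx).2.2 (fun h => h.2 rfl) (fun h => h.1.2 hx)
      exact hm (this ▸ hx)
    · obtain ⟨x, hx, -⟩ := h3 v h
      have : u = x := hG.2 v u x huv (h1 _ hx).2.2 (fun h => h.2 rfl) (fun h => h.1.2 hx)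
      exact hm (this ▸ hx)

/-- Arc-minimality makes the partial injection of missing arcs maximal, so that a vertex missing no
out-arc coincides with every vertex missing no in-arc. -/
lemma eq_of_minimal {D : Dgr V} (h : NearComplete D)
    (hmin : ∀ e ∈ D.Arcs, ¬ NearComplete (D.deleteArc e)) {a b : V}
    (ha : ∀ x, a ≠ x → D.Adj a x) (hb : ∀ x, x ≠ b → D.Adj x b) : a = b := by
  by_contra hab
  refine hmin (a, b) (ha b hab) ⟨fun u v w huv huw hv hw => ?_, fun u v w huv huw hv hw => ?_⟩
  · by_cases hu : u = a
    · subst hu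
      have e : ∀ x, u ≠ x → ¬ (D.deleteArc (u, b)).Adj u x → x = b := by
        intro x hx hn
        by_contra hxb
        exact hn ⟨ha x hx, by simpa using hxb⟩
      rw [e v huv hv, e w huw hw]
    · exact h.1 u v w huv huw (fun t => hv ⟨t, by simp [hu]⟩) (fun t => hw ⟨t, by simp [hu]⟩)
  · by_cases hu : u = b
    · subst hu
      have e : ∀ x, x ≠ u → ¬ (D.deleteArc (a, u)).Adj x u → x = a := by
        intro x hx hn
        by_contra hxb
        exact hn ⟨hb x hx, by simpa using hxb⟩
      rw [e v huv hv, e w huw hw]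
    · exact h.2 u v w huv huw (fun t => hv ⟨t, by simp [hu]⟩) (fun t => hw ⟨t, by simp [hu]⟩)

lemma mem_of_minimal {n : ℕ} {D : Dgr (Fin n)} (h : NearComplete D)
    (hmin : ∀ e ∈ D.Arcs, ¬ NearComplete (D.deleteArc e)) : D ∈ D1 n ∪ D2 n := by
  obtain ⟨σ, hσ⟩ := h.exists_perm
  let M : Set (Fin n × Fin n) := {p | p.1 ≠ p.2 ∧ ¬ D.Adj p.1 p.2}
  have hD : D = (completeD n).deleteArcs M := by
    obtain ⟨A, hA⟩ := D
    simp only [Dgr.deleteArcs, completeD, Dgr.mk.injEq]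
    funext u v
    refine propext ⟨fun t => ⟨?_, fun q => q.2 t⟩, fun t => ?_⟩
    · rintro rfl
      exact hA _ t
    · by_contra q
      exact t.2 ⟨t.1, q⟩
  have out_unique : ∀ u x, (u, x) ∈ M → ∃! x, (u, x) ∈ M := fun u x hx =>
    ⟨x, hx, fun y hy => h.1 u y x hy.1 hx.1 hy.2 hx.2⟩
  have in_unique : ∀ u x, (x, u) ∈ M → ∃! x, (x, u) ∈ M := fun u x hx =>
    ⟨x, hx, fun y hy => h.2 u y x hy.1 hx.1 hy.2 hx.2⟩
  -- If `a` misses no out-arc then `σ a` misses no in-arc, hence `σ a = a` by maximality.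
  have hfix : ∀ a, (∀ x, (a, x) ∉ M) → (∀ x, (x, a) ∉ M) := by
    intro a ha
    have hb : ∀ x, (x, σ a) ∉ M := by
      intro x hx
      have := σ.injective (hσ _ _ hx.1 hx.2)
      exact ha (σ a) (this ▸ hx)
    have e : a = σ a := eq_of_minimal h hmin
      (fun x hx => by_contra fun t => ha x ⟨hx, t⟩) (fun x hx => by_contra fun t => hb x ⟨hx, t⟩)
    rwa [← e] at hb
  have hback : ∀ b, (∀ x, (x, b) ∉ M) → (∀ x, (b, x) ∉ M) := by
    intro b hb
    have ha : ∀ x, (σ.symm b, x) ∉ M := by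
      intro x hx
      have e : σ (σ.symm b) = x := hσ _ _ hx.1 hx.2
      rw [σ.apply_symm_apply] at e
      rw [← e] at hx
      exact hb _ hx
    have e : σ.symm b = b := eq_of_minimal h hmin
      (fun x hx => by_contra fun t => ha x ⟨hx, t⟩) (fun x hx => by_contra fun t => hb x ⟨hx, t⟩)
    rwa [e] at ha
  by_cases hA : ∃ w, ∀ x, (w, x) ∉ M
  · obtain ⟨w, hw⟩ := hA
    have hw' := hfix w hw
    have huniq : ∀ a, (∀ x, (a, x) ∉ M) → a = w := fun a ha => eq_of_minimal h hmin
      (fun x hx => by_contra fun t => ha x ⟨hx, t⟩) (fun x hx => by_contra fun t => hw' x ⟨hx, t⟩)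
    refine Or.inr ⟨M, w, ⟨?_, ?_, ?_⟩, hD⟩
    · rintro ⟨u, v⟩ hp
      refine ⟨?_, ?_, hp.1⟩
      · rintro rfl
        exact hw _ hp
      · rintro rfl
        exact hw' _ hp
    · intro v hv
      obtain ⟨x, hx⟩ : ∃ x, (v, x) ∈ M := by
        by_contra! t
        exact hv (huniq v t)
      exact out_unique v x hx
    · intro v hv
      obtain ⟨x, hx⟩ : ∃ x, (x, v) ∈ M := by
        by_contra! t
        exact hv (huniq v (hback v t))
      exact in_unique v x hx
  · push Not at hA
    refine Or.inl ⟨M, ⟨fun p hp => ⟨trivial, trivial, hp.1⟩, ?_, ?_⟩, hD⟩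
    · intro v _
      obtain ⟨x, hx⟩ := hA v
      exact out_unique v x hx
    · intro v _
      obtain ⟨x, hx⟩ : ∃ x, (x, v) ∈ M := by
        by_contra! t
        obtain ⟨x, hx⟩ := hA v
        exact hback v t x hx
      exact in_unique v x hx

/-- for `n ≥ 3` and `2 ≤ k ≤ n`, a digraph `D` of order `n`
is minimally generalized `(k, n-2)`-arc-strongly connected iff
`D ∈ D_{n,1} ∪ D_{n,2}`. -/
theorem stmt_6 (n k : ℕ) (hn : 3 ≤ n) (hk : 2 ≤ k) (hkn : k ≤ n)
    (D : Dgr (Fin n)) :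
    MinASC D k (n - 2) ↔ D ∈ D1 n ∪ D2 n := by
  have hmin : MinASC D k (n - 2) ↔
      NearComplete D ∧ ∀ e ∈ D.Arcs, ¬ NearComplete (D.deleteArc e) := by
    refine and_congr (le_lambdaK_iff hn hk hkn D) (forall₂_congr fun e _ => ?_)
    -- `n - 2 ≥ 1`, so the truncated subtraction `n - 2 - 1` is harmless.
    rw [← le_lambdaK_iff hn hk hkn, not_le]
    omega
  rw [hmin]
  refine ⟨fun h => mem_of_minimal h.1 h.2, ?_⟩
  rintro (⟨M, hM, rfl⟩ | ⟨M, w, hM, rfl⟩)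
  · exact minimal_of_cycleFactorOn hM fun _ _ _ => Or.inl trivial
  · refine minimal_of_cycleFactorOn hM fun u v huv => ?_
    by_cases hu : u = w
    · exact Or.inr fun hv => huv (hu.trans hv.symm)
    · exact Or.inl hu

end TreeConn
end

section
/- For all integers n, k, ℓ with 2 ≤ k ≤ n and 1 ≤ ℓ ≤ n−1, the minimum number of arcs of a strong digraph D of order n with κ_k(D) = ℓ equals f(n,k,ℓ), and the minimum number of arcs of a strong digraph D of order n with λ_k(D) = ℓ equals g(n,k,ℓ). -/
/-!
Both parameters, `κ_k` and `λ_k`, are the minimum over `(S, r)` of a maximum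
packing of `(S, r)`-trees that are in particular pairwise arc-disjoint. Hence an
arc lies in at most one tree of the packing, and deleting an arc lowers the
parameter by at most one (`packK_le_deleteArc`). Moreover, as `k ≥ 2`, a
positive parameter forces the digraph to be strong (`strong_of_packK`).

Therefore a minimally generalized `(k, ℓ)`-connected digraph is strong, has an
arc, and has parameter exactly `ℓ`. Conversely, a digraph with the fewest arcs
among those with parameter at least `ℓ` is minimally generalized
`(k, ℓ)`-connected and has no more arcs than any digraph with parameter `ℓ`.
So the two minima agree (`sInf_strong_eq_sInf_minimal`). The same argument
shows that the two sets of sizes are empty simultaneously, in which case both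
minima are `0` by convention.
-/

/-!
Formalization of directed tree connectivity (Sun, "Extremal results for
directed tree connectivity").

A digraph (no loops, no parallel arcs) on a vertex type `V` is given by an
irreflexive adjacency relation.  Out-trees, `(S,r)`-trees, the parameters
`κ_k`, `λ_k`, minimally generalized `(k,ℓ)`-vertex/arc-strongly connected
digraphs, the families `D_{n,1}`, `D_{n,2}` and the extremal functions
`f, g, F, G` are defined below.
-/

namespace TreeConn

variable {V : Type}

/-- The maximum number of `(S, r)`-trees of `D` any two of which are related by
`R`, with `κ_{S,r}` and `λ_{S,r}` as the cases `R = IntDisj S r` and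
`R = ArcDisj`. -/
noncomputable def packSr (R : Set (V × V) → Set (V × V) → Prop) (D : Dgr V)
    (S : Set V) (r : V) : ℕ :=
  sSup {m | ∃ f : Fin m → Set (V × V), (∀ i, IsSRTree D S r (f i)) ∧
    ∀ i j, i ≠ j → R (f i) (f j)}

/-- The minimum of `packSr` over all `S` of size `k` and `r ∈ S`, for a
disjointness relation `R` that may depend on `S` and `r`. -/
noncomputable def packK (R : Set V → V → Set (V × V) → Set (V × V) → Prop)
    (D : Dgr V) (k : ℕ) : ℕ :=
  sInf {m | ∃ S : Set V, ∃ r ∈ S, S.ncard = k ∧ m = packSr (R S r) D S r}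

theorem IsSRTree.nonempty {D : Dgr V} {S : Set V} {r : V} {T : Set (V × V)}
    (hS : 2 ≤ S.ncard) (h : IsSRTree D S r T) : T.Nonempty := by
  obtain ⟨v, hv, hvr⟩ := Set.exists_ne_of_one_lt_ncard (by omega : 1 < S.ncard) r
  rcases h.2.2 hv with ⟨u, hu | hu⟩ | h'
  · exact ⟨_, hu⟩
  · exact ⟨_, hu⟩
  · exact absurd h' hvr

/-- Pairwise arc-disjoint trees on at least two vertices each own an arc, so
there are at most as many of them as ordered pairs of vertices. In particular
the supremum defining `packSr` is a genuine maximum. -/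
theorem bddAbove_pack [Finite V] {R : Set (V × V) → Set (V × V) → Prop}
    (hR : ∀ T₁ T₂, R T₁ T₂ → ArcDisj T₁ T₂) (D : Dgr V) {S : Set V}
    (hS : 2 ≤ S.ncard) (r : V) :
    BddAbove {m | ∃ f : Fin m → Set (V × V), (∀ i, IsSRTree D S r (f i)) ∧
      ∀ i j, i ≠ j → R (f i) (f j)} := by
  refine ⟨Nat.card (V × V), ?_⟩
  rintro m ⟨f, hf, hd⟩
  choose a ha using fun i => (hf i).nonempty hS
  have hinj : Function.Injective a := by
    intro i j hij
    by_contra hne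
    have h : a i ∈ f i ∩ f j := ⟨ha i, hij ▸ ha j⟩
    rw [hR _ _ (hd i j hne)] at h
    exact h
  simpa using Nat.card_le_card_of_injective a hinj

theorem packSr_attained [Finite V] {R : Set (V × V) → Set (V × V) → Prop}
    (hR : ∀ T₁ T₂, R T₁ T₂ → ArcDisj T₁ T₂) (D : Dgr V) {S : Set V}
    (hS : 2 ≤ S.ncard) (r : V) :
    ∃ f : Fin (packSr R D S r) → Set (V × V), (∀ i, IsSRTree D S r (f i)) ∧
      ∀ i j, i ≠ j → R (f i) (f j) :=
  Nat.sSup_mem (s := {m | ∃ f : Fin m → Set (V × V), (∀ i, IsSRTree D S r (f i)) ∧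
      ∀ i j, i ≠ j → R (f i) (f j)})
    ⟨0, Fin.elim0, fun i => i.elim0, fun i => i.elim0⟩ (bddAbove_pack hR D hS r)

/-- An arc lies in at most one tree of a maximum packing, so discarding one
tree leaves a packing that survives the deletion of the arc. -/
theorem packSr_le_deleteArc [Finite V] {R : Set (V × V) → Set (V × V) → Prop}
    (hR : ∀ T₁ T₂, R T₁ T₂ → ArcDisj T₁ T₂) (D : Dgr V) (e : V × V) {S : Set V}
    (hS : 2 ≤ S.ncard) (r : V) :
    packSr R D S r ≤ packSr R (D.deleteArc e) S r + 1 := by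
  obtain ⟨f, hf, hd⟩ := packSr_attained hR D hS r
  generalize packSr R D S r = m at f hf hd
  cases m with
  | zero => omega
  | succ m =>
    obtain ⟨i₀, hi₀⟩ : ∃ i₀, ∀ i, i ≠ i₀ → e ∉ f i := by
      by_cases h : ∃ i, e ∈ f i
      · obtain ⟨i₀, h₀⟩ := h
        refine ⟨i₀, fun i hi he => ?_⟩
        have h : e ∈ f i ∩ f i₀ := ⟨he, h₀⟩
        rw [hR _ _ (hd i i₀ hi)] at h
        exact h
      · exact ⟨0, fun i _ he => h ⟨i, he⟩⟩
    refine Nat.succ_le_succ (le_csSup (bddAbove_pack hR _ hS r)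
      ⟨fun j => f (i₀.succAbove j), fun j => ⟨fun p hp => ?_, (hf _).2⟩,
        fun i j hij => hd _ _ fun h => hij (Fin.succAbove_right_injective h)⟩)
    refine ⟨(hf _).1 hp, ?_⟩
    rintro rfl
    exact hi₀ _ (Fin.succAbove_ne i₀ j) hp

theorem packK_le_deleteArc {n k : ℕ}
    {R : Set (Fin n) → Fin n → Set (Fin n × Fin n) → Set (Fin n × Fin n) → Prop}
    (hR : ∀ S r T₁ T₂, R S r T₁ T₂ → ArcDisj T₁ T₂) (hk : 2 ≤ k) (hkn : k ≤ n)
    (D : Dgr (Fin n)) (e : Fin n × Fin n) :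
    packK R D k ≤ packK R (D.deleteArc e) k + 1 := by
  have hne : {m | ∃ S : Set (Fin n), ∃ r ∈ S, S.ncard = k ∧
      m = packSr (R S r) (D.deleteArc e) S r}.Nonempty := by
    obtain ⟨S, -, hS⟩ := Set.exists_subset_card_eq
      (s := (Set.univ : Set (Fin n))) (n := k) (by simpa [Set.ncard_univ] using hkn)
    obtain ⟨r, hr⟩ := Set.nonempty_of_ncard_ne_zero (by omega : S.ncard ≠ 0)
    exact ⟨_, S, r, hr, hS, rfl⟩
  obtain ⟨S, r, hr, hS, h⟩ := Nat.sInf_mem hne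
  calc packK R D k ≤ packSr (R S r) D S r := Nat.sInf_le ⟨S, r, hr, hS, rfl⟩
    _ ≤ packSr (R S r) (D.deleteArc e) S r + 1 :=
      packSr_le_deleteArc (hR S r) D e (by omega) r
    _ = packK R (D.deleteArc e) k + 1 := by rw [← h]; rfl

/-- For `u ≠ v`, a single tree rooted at `u` for some `S ∋ u, v` already
contains a path from `u` to `v`. -/
theorem strong_of_packK {n k : ℕ}
    {R : Set (Fin n) → Fin n → Set (Fin n × Fin n) → Set (Fin n × Fin n) → Prop}
    (hR : ∀ S r T₁ T₂, R S r T₁ T₂ → ArcDisj T₁ T₂) (hk : 2 ≤ k) (hkn : k ≤ n)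
    {D : Dgr (Fin n)} (h : 1 ≤ packK R D k) : Strong D := by
  intro u v
  by_cases huv : u = v
  · subst huv; rfl
  obtain ⟨S, hsub, -, hS⟩ := Set.exists_subsuperset_card_eq
    (s := {u, v}) (t := (Set.univ : Set (Fin n))) (n := k) (Set.subset_univ _)
    (by rw [Set.ncard_pair huv]; exact hk) (by simpa [Set.ncard_univ] using hkn)
  have hu : u ∈ S := hsub (by simp)
  have hpos : 1 ≤ packSr (R S u) D S u :=
    h.trans (Nat.sInf_le ⟨S, u, hu, hS, rfl⟩)
  obtain ⟨f, hf, -⟩ := packSr_attained (hR S u) D (by omega : 2 ≤ S.ncard) u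
  obtain ⟨hA, hT, hV⟩ := hf ⟨0, hpos⟩
  rcases hV (hsub (by simp : v ∈ ({u, v} : Set (Fin n)))) with hv | hv
  · exact Relation.ReflTransGen.mono (fun a b hab => hA hab) _ _ (hT.1 v hv)
  · exact absurd hv.symm huv

/-- The extremal argument for any digraph parameter `c` that forces strongness
when positive and drops by at most one under an arc deletion. If one of the two
sets of sizes is empty, so is the other, and both infima are `0`. -/
theorem sInf_strong_eq_sInf_minimal {n ℓ : ℕ} (hn : 2 ≤ n) (hl : 1 ≤ ℓ)
    (c : Dgr (Fin n) → ℕ) (hs : ∀ D, 1 ≤ c D → Strong D)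
    (hd : ∀ D e, c D ≤ c (D.deleteArc e) + 1) :
    sInf {m | ∃ D : Dgr (Fin n), Strong D ∧ c D = ℓ ∧ D.Arcs.ncard = m} =
      sInf {m | ∃ D : Dgr (Fin n),
        (ℓ ≤ c D ∧ ∀ e ∈ D.Arcs, c (D.deleteArc e) ≤ ℓ - 1) ∧
          D.Arcs.ncard = m} := by
  have hsub : {m | ∃ D : Dgr (Fin n),
      (ℓ ≤ c D ∧ ∀ e ∈ D.Arcs, c (D.deleteArc e) ≤ ℓ - 1) ∧
        D.Arcs.ncard = m} ⊆
      {m | ∃ D : Dgr (Fin n), Strong D ∧ c D = ℓ ∧ D.Arcs.ncard = m} := by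
    rintro m ⟨D, ⟨h₁, h₂⟩, hm⟩
    have hst := hs D (hl.trans h₁)
    obtain ⟨e, he⟩ : D.Arcs.Nonempty := by
      rcases (hst ⟨0, by omega⟩ ⟨1, by omega⟩).cases_head with h | ⟨w, hw, -⟩
      · simp at h
      · exact ⟨(_, w), hw⟩
    have h₃ := h₂ e he
    have h₄ := hd D e
    exact ⟨D, hst, by omega, hm⟩
  have hex : ∀ m ∈ {m | ∃ D : Dgr (Fin n), Strong D ∧ c D = ℓ ∧
      D.Arcs.ncard = m}, ∃ m' ≤ m, m' ∈ {m | ∃ D : Dgr (Fin n),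
      (ℓ ≤ c D ∧ ∀ e ∈ D.Arcs, c (D.deleteArc e) ≤ ℓ - 1) ∧
        D.Arcs.ncard = m} := by
    rintro m ⟨D, -, hD, hm⟩
    -- A digraph of least size among all those with `ℓ ≤ c` is minimal.
    have hmem := Nat.sInf_mem
      (s := {m | ∃ D : Dgr (Fin n), ℓ ≤ c D ∧ D.Arcs.ncard = m}) ⟨m, D, hD.ge, hm⟩
    obtain ⟨D', hD', hc⟩ := hmem
    refine ⟨_, hc.le.trans (Nat.sInf_le ⟨D, hD.ge, hm⟩), D', ⟨hD', fun e he => ?_⟩, rfl⟩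
    by_contra hlt
    have hle : D'.Arcs.ncard ≤ (D'.deleteArc e).Arcs.ncard :=
      hc.le.trans (Nat.sInf_le ⟨D'.deleteArc e, by omega, rfl⟩)
    have hss : (D'.deleteArc e).Arcs ⊂ D'.Arcs :=
      ⟨fun p hp => hp.1, fun h => (h he).2 rfl⟩
    exact absurd (Set.ncard_lt_ncard hss) (by omega)
  rcases Set.eq_empty_or_nonempty {m | ∃ D : Dgr (Fin n), Strong D ∧ c D = ℓ ∧
      D.Arcs.ncard = m} with h₀ | h₀
  · rw [h₀, Set.subset_empty_iff] at hsub
    rw [h₀, hsub]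
  · obtain ⟨m', hle, hm'⟩ := hex _ (Nat.sInf_mem h₀)
    exact le_antisymm (Nat.sInf_le (hsub (Nat.sInf_mem ⟨m', hm'⟩)))
      ((Nat.sInf_le hm').trans hle)

/-- `s(n,k,ℓ) = f(n,k,ℓ)` and `t(n,k,ℓ) = g(n,k,ℓ)`, where
`s` (resp. `t`) is the minimum size of a strong digraph `D` of order `n`
with `κ_k(D) = ℓ` (resp. `λ_k(D) = ℓ`). -/
theorem stmt_11 (n k ℓ : ℕ) (hk : 2 ≤ k) (hkn : k ≤ n) (hl : 1 ≤ ℓ)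
    (hln : ℓ ≤ n - 1) :
    sInf {m | ∃ D : Dgr (Fin n), Strong D ∧ kappaK D k = ℓ ∧
        D.Arcs.ncard = m} = fMin n k ℓ ∧
    sInf {m | ∃ D : Dgr (Fin n), Strong D ∧ lambdaK D k = ℓ ∧
        D.Arcs.ncard = m} = gMin n k ℓ := by
  have hI : ∀ (S : Set (Fin n)) (r : Fin n) (T₁ T₂ : Set (Fin n × Fin n)),
      IntDisj S r T₁ T₂ → ArcDisj T₁ T₂ := fun _ _ _ _ h => h.1
  have hA : ∀ (S : Set (Fin n)) (r : Fin n) (T₁ T₂ : Set (Fin n × Fin n)),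
      (fun _ _ => ArcDisj) S r T₁ T₂ → ArcDisj T₁ T₂ := fun _ _ _ _ h => h
  -- `kappaK` and `lambdaK` are by definition the instances of `packK` for the
  -- relations `IntDisj` and `ArcDisj`.
  exact ⟨sInf_strong_eq_sInf_minimal (hk.trans hkn) hl (fun D => kappaK D k)
      (fun _ h => strong_of_packK hI hk hkn h) (packK_le_deleteArc hI hk hkn),
    sInf_strong_eq_sInf_minimal (hk.trans hkn) hl (fun D => lambdaK D k)
      (fun _ h => strong_of_packK hA hk hkn h) (packK_le_deleteArc hA hk hkn)⟩

end TreeConn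
end

section
/- For all integers n, k, ℓ with 2 ≤ k ≤ n and 1 ≤ ℓ ≤ n−1, f(n,k,ℓ) ≥ nℓ. Moreover, f(n,k,1) = n for every 2 ≤ k ≤ n, and f(n,n,ℓ) = nℓ for every 2 ≤ ℓ ≤ n−1. -/
/-!
Lower bound. Take `ℓ` internally disjoint `(S, r)`-trees and a vertex `v ∈ S` with `v ≠ r`. Each tree
has an arc into `v`, and these arcs are distinct by arc-disjointness, so `v` has in-degree at
least `ℓ`. Since `k ≥ 2`, every vertex lies in some `k`-set `S` with a root `r ≠ v`; hence
`κ_k(D) ≥ ℓ` forces at least `nℓ` arcs. For `fMin`, an infimum in `ℕ`, the bound also requires that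
a minimally generalized `(k, ℓ)`-vertex-strongly connected digraph exists: `κ_k(↔K_n) ≥ n - 1`, by
the trees `r → v → S \ {r, v}` indexed by `v ≠ r`, and a digraph with `κ_k ≥ ℓ` and the fewest arcs
is minimal.

Upper bounds. A digraph with `κ_k ≥ ℓ` and at most `nℓ` arcs is automatically minimal, by the lower
bound. The circulant digraph on `ℤ/n` with the arcs `u → u + j`, `1 ≤ j ≤ ℓ`, has `nℓ` arcs, and from
every root it has `ℓ` arc-disjoint out-branchings (`circ_branchings`). With root `0`, the branching of
colour `c ∈ {1, …, ℓ}` gives `c` the parent `0`, a vertex `v > c` the largest `u < v` with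
`u ≡ c (mod ℓ)`, and a vertex `0 < v < c` the parent `n - 1 - ℓ + c`. The parents of a fixed `v` under
colours `c < v`, `c = v`, `c > v` lie in `[1, v)`, `{0}`, `(v, n)` respectively, and are distinct.
-/

/-!
Formalization of directed tree connectivity (Sun, "Extremal results for
directed tree connectivity").

A digraph (no loops, no parallel arcs) on a vertex type `V` is given by an
irreflexive adjacency relation.  Out-trees, `(S,r)`-trees, the parameters
`κ_k`, `λ_k`, minimally generalized `(k,ℓ)`-vertex/arc-strongly connected
digraphs, the families `D_{n,1}`, `D_{n,2}` and the extremal functions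
`f, g, F, G` are defined below.
-/

namespace TreeConn

variable {V : Type}

/-! ### Trees and in-degrees -/

/-- A family of `m` internally disjoint `(S, r)`-trees gives `m` distinct in-neighbours of any
non-root vertex of `S`. -/
lemma exists_inNeighbors {D : Dgr V} {S : Set V} {r v : V} {m : ℕ} {f : Fin m → Set (V × V)}
    (hf : ∀ i, IsSRTree D S r (f i)) (hd : ∀ i j, i ≠ j → IntDisj S r (f i) (f j))
    (hv : v ∈ S) (hvr : v ≠ r) :
    ∃ g : Fin m → V, Function.Injective g ∧ ∀ i, D.Adj (g i) v := by
  have h : ∀ i, ∃ u, (u, v) ∈ f i := by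
    intro i
    obtain ⟨-, ⟨-, -, h3⟩, hS⟩ := hf i
    rcases hS hv with h | h
    · exact (h3 v h hvr).exists
    · exact absurd h hvr
  choose g hg using h
  refine ⟨g, fun i j hij => ?_, fun i => (hf i).1 (hg i)⟩
  by_contra hne
  have h1 : (g i, v) ∈ f i ∩ f j := ⟨hg i, by rw [hij]; exact hg j⟩
  rw [(hd i j hne).1] at h1
  exact h1

/-- Boundedness of the set whose supremum is `kappaSr`, without which the supremum would be `0`. -/
lemma bddAbove_kappa [Finite V] (D : Dgr V) {S : Set V} {r : V} (hS : 2 ≤ S.ncard) :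
    BddAbove {m | ∃ f : Fin m → Set (V × V), (∀ i, IsSRTree D S r (f i)) ∧
      ∀ i j, i ≠ j → IntDisj S r (f i) (f j)} := by
  obtain ⟨v, hv, hvr⟩ := Set.exists_ne_of_one_lt_ncard (by omega : 1 < S.ncard) r
  refine ⟨Nat.card V, ?_⟩
  rintro m ⟨f, hf, hd⟩
  obtain ⟨g, hg, -⟩ := exists_inNeighbors hf hd hv hvr
  simpa using Nat.card_le_card_of_injective g hg

lemma le_kappaSr_iff [Finite V] (D : Dgr V) {S : Set V} {r : V} (hS : 2 ≤ S.ncard) (ℓ : ℕ) :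
    ℓ ≤ kappaSr D S r ↔ ∃ f : Fin ℓ → Set (V × V), (∀ i, IsSRTree D S r (f i)) ∧
      ∀ i j, i ≠ j → IntDisj S r (f i) (f j) := by
  constructor
  · intro h
    have hne : {m | ∃ f : Fin m → Set (V × V), (∀ i, IsSRTree D S r (f i)) ∧
        ∀ i j, i ≠ j → IntDisj S r (f i) (f j)}.Nonempty :=
      ⟨0, fun i => i.elim0, fun i => i.elim0, fun i => i.elim0⟩
    obtain ⟨f, hf, hd⟩ := Nat.sSup_mem hne (bddAbove_kappa D hS)
    exact ⟨fun i => f (Fin.castLE h i), fun i => hf _,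
      fun i j hij => hd _ _ fun h' => hij (Fin.castLE_injective h h')⟩
  · intro h
    exact le_csSup (bddAbove_kappa D hS) h

lemma le_kappaK_iff {n k : ℕ} (hk : 2 ≤ k) (hkn : k ≤ n) (D : Dgr (Fin n)) (ℓ : ℕ) :
    ℓ ≤ kappaK D k ↔ ∀ S : Set (Fin n), ∀ r ∈ S, S.ncard = k →
      ∃ f : Fin ℓ → Set (Fin n × Fin n), (∀ i, IsSRTree D S r (f i)) ∧
        ∀ i j, i ≠ j → IntDisj S r (f i) (f j) := by
  constructor
  · intro h S r hr hS
    rw [← le_kappaSr_iff D (by omega)]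
    exact h.trans (Nat.sInf_le ⟨S, r, hr, hS, rfl⟩)
  · intro h
    apply le_csInf
    · obtain ⟨S, -, hS⟩ := Set.exists_subset_card_eq (s := (Set.univ : Set (Fin n))) (n := k)
        (by simpa [Set.ncard_univ] using hkn)
      obtain ⟨r, hr⟩ := Set.nonempty_of_ncard_ne_zero (s := S) (by omega)
      exact ⟨_, S, r, hr, hS, rfl⟩
    · rintro m ⟨S, r, hr, hS, rfl⟩
      rw [le_kappaSr_iff D (by omega)]
      exact h S r hr hS

/-- Every in-degree is at least `ℓ` as soon as `κ_k(D) ≥ ℓ`; summing gives `nℓ` arcs. -/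
lemma mul_le_ncard_arcs {n k ℓ : ℕ} (hk : 2 ≤ k) (hkn : k ≤ n) (D : Dgr (Fin n))
    (h : ℓ ≤ kappaK D k) : n * ℓ ≤ D.Arcs.ncard := by
  rw [le_kappaK_iff hk hkn] at h
  have key : ∀ v : Fin n, ∃ g : Fin ℓ → Fin n, Function.Injective g ∧ ∀ i, D.Adj (g i) v := by
    intro v
    obtain ⟨S, hvS, -, hS⟩ := Set.exists_subsuperset_card_eq (s := {v})
      (t := (Set.univ : Set (Fin n))) (n := k) (Set.subset_univ _)
      (by simp; omega) (by simpa [Set.ncard_univ] using hkn)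
    obtain ⟨r, hr, hrv⟩ := Set.exists_ne_of_one_lt_ncard (by omega : 1 < S.ncard) v
    obtain ⟨f, hf, hd⟩ := h S r hr hS
    exact exists_inNeighbors hf hd (hvS rfl) hrv.symm
  choose g hg ha using key
  have hinj : Function.Injective
      (fun p : Fin n × Fin ℓ => (⟨(g p.1 p.2, p.1), ha p.1 p.2⟩ : D.Arcs)) := by
    rintro ⟨v, i⟩ ⟨w, j⟩ hp
    have hp' := congrArg Subtype.val hp
    obtain rfl : v = w := congrArg Prod.snd hp'
    exact congrArg (Prod.mk v) (hg v (congrArg Prod.fst hp'))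
  have := Nat.card_le_card_of_injective _ hinj
  simpa [Set.ncard] using this

lemma ncard_deleteArc_lt [Finite V] (D : Dgr V) {e : V × V} (he : e ∈ D.Arcs) :
    (D.deleteArc e).Arcs.ncard < D.Arcs.ncard :=
  Set.ncard_lt_ncard ⟨fun _ hp => hp.1, fun h => (h he).2 rfl⟩ (Set.toFinite _)

lemma minVSC_of_ncard_le {n k ℓ : ℕ} (hk : 2 ≤ k) (hkn : k ≤ n) (D : Dgr (Fin n))
    (h : ℓ ≤ kappaK D k) (hD : D.Arcs.ncard ≤ n * ℓ) : MinVSC D k ℓ := by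
  refine ⟨h, fun e he => ?_⟩
  by_contra hc
  have h1 := mul_le_ncard_arcs hk hkn (D.deleteArc e) (ℓ := ℓ) (by omega)
  have h2 := ncard_deleteArc_lt D he
  omega

/-- A digraph with `κ_k ≥ ℓ` and the fewest arcs is minimally generalized
`(k, ℓ)`-vertex-strongly connected. -/
lemma exists_minVSC {n k ℓ : ℕ} (D : Dgr (Fin n)) (h : ℓ ≤ kappaK D k) :
    ∃ D' : Dgr (Fin n), MinVSC D' k ℓ := by
  obtain ⟨D', hD', hmin⟩ := (measure fun D : Dgr (Fin n) => D.Arcs.ncard).wf.has_min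
    {D | ℓ ≤ kappaK D k} ⟨D, h⟩
  refine ⟨D', hD', fun e he => ?_⟩
  by_contra hc
  exact hmin _ (show ℓ ≤ kappaK (D'.deleteArc e) k by omega) (ncard_deleteArc_lt _ he)

/-! ### Trees from parent functions -/

/-- The arc set with vertex set `W` in which each `w ∈ W` other than the root `r` has the
parent `par w`. -/
def parTree (W : Set V) (r : V) (par : V → V) : Set (V × V) :=
  {p | p.2 ∈ W ∧ p.2 ≠ r ∧ p.1 = par p.2}

lemma tverts_parTree {W : Set V} {r : V} {par : V → V} (hr : r ∈ W)
    (hpar : ∀ w ∈ W, w ≠ r → par w ∈ W) : tverts (parTree W r par) r = W := by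
  ext v
  constructor
  · rintro (⟨u, h | h⟩ | h)
    · exact h.1
    · obtain ⟨h1, h2, h3⟩ := h
      dsimp only at h1 h2 h3
      rw [h3]
      exact hpar u h1 h2
    · rw [h]
      exact hr
  · intro hv
    by_cases hvr : v = r
    · exact Or.inr hvr
    · exact Or.inl ⟨par v, Or.inl ⟨hv, hvr, rfl⟩⟩

/-- A parent function that strictly decreases some rank defines an out-tree. -/
lemma isOutTree_parTree {W : Set V} {r : V} {par : V → V} (rk : V → ℕ) (hr : r ∈ W)
    (hpar : ∀ w ∈ W, w ≠ r → par w ∈ W) (hrk : ∀ w ∈ W, w ≠ r → rk (par w) < rk w) :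
    IsOutTree (parTree W r par) r := by
  have hW : ∀ v ∈ averts (parTree W r par), v ∈ W := fun v hv => by
    rw [← tverts_parTree hr hpar]
    exact Or.inl hv
  have hreach : ∀ N, ∀ v ∈ W, rk v = N →
      Relation.ReflTransGen (fun a b => (a, b) ∈ parTree W r par) r v := by
    intro N
    induction N using Nat.strong_induction_on with
    | _ N ih =>
      intro v hv hN
      by_cases hvr : v = r
      · rw [hvr]
      · exact (ih _ (hN ▸ hrk v hv hvr) _ (hpar v hv hvr) rfl).tail ⟨hv, hvr, rfl⟩
  refine ⟨fun v hv => hreach _ v (hW v hv) rfl, fun p hp => hp.2.1, fun v hv hvr => ?_⟩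
  exact ⟨par v, ⟨hW v hv, hvr, rfl⟩, fun u hu => hu.2.2⟩

lemma arcDisj_parTree {W W' : Set V} {r : V} {par par' : V → V}
    (h : ∀ w ∈ W, w ∈ W' → w ≠ r → par w ≠ par' w) :
    ArcDisj (parTree W r par) (parTree W' r par') := by
  rw [ArcDisj, Set.eq_empty_iff_forall_notMem]
  rintro p ⟨h1, h2⟩
  exact h p.2 h1.1 h2.1 h1.2.1 (h1.2.2.symm.trans h2.2.2)

/-! ### The complete digraph -/

/-- `κ_k(↔K_n) ≥ n - 1`, by the trees `r → v → S \ {r, v}` for `v ≠ r`. -/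
lemma le_kappaK_completeD {n k ℓ : ℕ} (hk : 2 ≤ k) (hkn : k ≤ n) (hln : ℓ ≤ n - 1) :
    ℓ ≤ kappaK (completeD n) k := by
  classical
  rw [le_kappaK_iff hk hkn]
  intro S r hr _
  have hc : Fintype.card (Fin ℓ) ≤ Fintype.card {v : Fin n // v ≠ r} := by
    simpa [Fintype.card_subtype_compl] using hln
  obtain ⟨φ⟩ := Function.Embedding.nonempty_of_card_le hc
  have hrW : ∀ v : Fin n, r ∈ insert v S := fun v => Set.mem_insert_of_mem _ hr
  have hpar : ∀ v : Fin n, ∀ w ∈ insert v S, w ≠ r →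
      (if w = v then r else v) ∈ insert v S := by
    intro v w _ _
    split_ifs
    · exact hrW v
    · exact Set.mem_insert _ _
  refine ⟨fun i => parTree (insert (φ i).1 S) r fun w => if w = (φ i).1 then r else (φ i).1,
    fun i => ⟨?_, ?_, ?_⟩, fun i j hij => ⟨?_, ?_⟩⟩
  · rintro ⟨u, w⟩ ⟨h1, h2, h3⟩
    dsimp only at h1 h2 h3
    change u ≠ w
    rw [h3]
    split_ifs with h
    · exact h2.symm
    · exact Ne.symm h
  · refine isOutTree_parTree (fun w => if w = r then 0 else if w = (φ i).1 then 1 else 2)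
      (hrW _) (hpar _) fun w _ hw => ?_
    have := (φ i).2
    by_cases h : w = (φ i).1 <;> simp_all
  · rw [tverts_parTree (hrW _) (hpar _)]
    exact Set.subset_insert _ _
  · have hne : (φ i).1 ≠ (φ j).1 := fun h => hij (φ.injective (Subtype.ext h))
    refine arcDisj_parTree fun w _ _ hw => ?_
    have h1 := (φ i).2
    have h2 := (φ j).2
    split_ifs with ha hb
    · exact absurd (ha.symm.trans hb) hne
    · exact h2.symm
    · exact h1
    · exact hne
  · have hne : (φ i).1 ≠ (φ j).1 := fun h => hij (φ.injective (Subtype.ext h))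
    rw [tverts_parTree (hrW _) (hpar _), tverts_parTree (hrW _) (hpar _)]
    ext w
    simp only [Set.mem_inter_iff, Set.mem_insert_iff]
    constructor
    · rintro ⟨h1 | h1, h2 | h2⟩
      · exact absurd (h1.symm.trans h2) hne
      all_goals assumption
    · exact fun h => ⟨Or.inr h, Or.inr h⟩

/-! ### The circulant digraph -/

/-- The circulant digraph on `Fin n = ℤ/n` with the arcs `u → u + j` for `1 ≤ j ≤ ℓ`. -/
def circ (n ℓ : ℕ) : Dgr (Fin n) :=
  ⟨fun u v => 1 ≤ (v - u).val ∧ (v - u).val ≤ ℓ, fun v h => by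
    have : NeZero n := ⟨by have := v.2; omega⟩
    simp at h⟩

lemma ncard_circ_le (n ℓ : ℕ) : (circ n ℓ).Arcs.ncard ≤ n * ℓ := by
  have hinj : Function.Injective (fun p : (circ n ℓ).Arcs =>
      ((p.1.1, ⟨(p.1.2 - p.1.1).val - 1, by have := p.2.1; have := p.2.2; omega⟩) :
        Fin n × Fin ℓ)) := by
    rintro ⟨⟨u, v⟩, h1⟩ ⟨⟨u', v'⟩, h2⟩ h
    have : NeZero n := ⟨by have := v.2; omega⟩
    simp only [Prod.mk.injEq, Fin.mk.injEq] at h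
    obtain ⟨rfl, h⟩ := h
    have h3 : (v - u).val = (v' - u).val := by
      have := h1.1
      have := h2.1
      dsimp only at *
      omega
    simp only [Subtype.mk.injEq, Prod.mk.injEq, true_and]
    exact sub_left_injective (Fin.ext h3)
  have := Nat.card_le_card_of_injective _ hinj
  simpa [Set.ncard] using this

/-- The parent of `v` in the branching of colour `c` of the circulant digraph rooted at `0`. In the
case `c < v` it is the largest `u < v` with `u ≡ c (mod ℓ)`. -/
def circPar (n ℓ c v : ℕ) : ℕ :=
  if v < c then n - 1 - ℓ + c else if v = c then 0 else v - 1 - (v - 1 - c) % ℓ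

/-- A rank that decreases from a vertex to its parent `circPar n ℓ c`: the vertices
below `c`, whose parents lie at or above `c`, are placed last. -/
def circRk (n c v : ℕ) : ℕ := if v = 0 then 0 else if v < c then n else v

lemma circPar_lt {n ℓ c v : ℕ} (hc : c ≤ ℓ) (hv : v < n) (hn : ℓ < n) :
    circPar n ℓ c v < n := by
  unfold circPar
  split_ifs <;> omega

lemma circRk_circPar_lt {n ℓ c v : ℕ} (hc : 1 ≤ c) (hc' : c ≤ ℓ) (hv : 1 ≤ v)
    (hn : ℓ < n) : circRk n c (circPar n ℓ c v) < circRk n c v := by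
  have := Nat.mod_le (v - 1 - c) ℓ
  unfold circPar circRk
  split_ifs <;> omega

/-- The arc from the parent of `v` to `v` has length in `[1, ℓ]`, up to wrapping around once. -/
lemma circPar_diff {n ℓ c v : ℕ} (hc : 1 ≤ c) (hc' : c ≤ ℓ) (hv : 1 ≤ v) (hn : ℓ < n) :
    (circPar n ℓ c v < v ∧ v ≤ circPar n ℓ c v + ℓ) ∨
      (v < circPar n ℓ c v ∧ n + v ≤ circPar n ℓ c v + ℓ) := by
  have := Nat.mod_lt (v - 1 - c) (show ℓ > 0 by omega)
  have := Nat.mod_le (v - 1 - c) ℓ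
  unfold circPar
  split_ifs <;> omega

lemma circPar_modEq {n ℓ c v : ℕ} (hv : c < v) : circPar n ℓ c v ≡ c [MOD ℓ] := by
  have h := Nat.mod_add_div (v - 1 - c) ℓ
  have h1 : circPar n ℓ c v = c + ℓ * ((v - 1 - c) / ℓ) := by
    unfold circPar
    split_ifs <;> omega
  rw [h1]
  simp [Nat.ModEq]

/-- Different colours give every non-root vertex different parents. -/
lemma circPar_inj {n ℓ c d v : ℕ} (hc : 1 ≤ c) (hc' : c ≤ ℓ) (hd : 1 ≤ d) (hd' : d ≤ ℓ)
    (hn : ℓ < n) (h : circPar n ℓ c v = circPar n ℓ d v) : c = d := by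
  by_cases hcd : c < v ∧ d < v
  · have h1 : c ≡ d [MOD ℓ] :=
      (circPar_modEq hcd.1).symm.trans (h ▸ circPar_modEq hcd.2)
    -- Residues are represented in `[1, ℓ]`, so `Nat.ModEq.eq_of_lt_of_lt` applies after a shift.
    have h2 : c - 1 ≡ d - 1 [MOD ℓ] := by
      apply Nat.ModEq.add_right_cancel' 1
      rwa [Nat.sub_add_cancel hc, Nat.sub_add_cancel hd]
    have := h2.eq_of_lt_of_lt (by omega) (by omega)
    omega
  · have := Nat.mod_le (v - 1 - c) ℓ
    have := Nat.mod_le (v - 1 - d) ℓ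
    unfold circPar at h
    split_ifs at h <;> omega

/-- From every root, the circulant digraph has `ℓ` arc-disjoint spanning out-trees: the
translates of the trees given by `circPar`. -/
lemma circ_branchings {n ℓ : ℕ} (hn : ℓ < n) (r : Fin n) :
    ∃ f : Fin ℓ → Set (Fin n × Fin n),
      (∀ i, f i ⊆ (circ n ℓ).Arcs ∧ IsOutTree (f i) r ∧ tverts (f i) r = Set.univ) ∧
      ∀ i j, i ≠ j → ArcDisj (f i) (f j) := by
  have : NeZero n := ⟨by omega⟩
  let P : Fin ℓ → Fin n → Fin n := fun i y =>
    ⟨circPar n ℓ (i + 1) y, circPar_lt (by omega) y.2 hn⟩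
  have hpos : ∀ w : Fin n, w ≠ r → 1 ≤ (w - r).val := fun w hw =>
    Nat.one_le_iff_ne_zero.mpr fun h => hw (sub_eq_zero.mp (Fin.ext h))
  refine ⟨fun i => parTree Set.univ r fun w => r + P i (w - r), fun i => ⟨?_, ?_, ?_⟩,
    fun i j hij => ?_⟩
  · rintro ⟨u, w⟩ ⟨-, h2, h3⟩
    dsimp only at h2 h3
    subst h3
    change 1 ≤ (w - (r + P i (w - r))).val ∧ (w - (r + P i (w - r))).val ≤ ℓ
    rw [← sub_sub]
    have h4 := hpos w h2
    generalize w - r = y at h4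
    have h5 := circPar_diff (n := n) (c := i + 1) (by omega) (by omega) h4 hn
    have h6 : (P i y).val = circPar n ℓ (i + 1) y := rfl
    have h7 := (P i y).2
    have h8 := y.2
    rw [← h6] at h5
    have h9 : (y - P i y).val = (n - (P i y).val + y.val) % n := by rw [Fin.sub_def]
    rw [h9]
    rcases h5 with h5 | h5
    · rw [show n - (P i y).val + y.val = (y.val - (P i y).val) + n by omega, Nat.add_mod_right,
        Nat.mod_eq_of_lt (by omega)]
      omega
    · rw [Nat.mod_eq_of_lt (by omega)]
      omega
  · refine isOutTree_parTree (fun w => circRk n (i + 1) (w - r).val) (Set.mem_univ _)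
      (fun _ _ _ => Set.mem_univ _) fun w _ hw => ?_
    rw [add_sub_cancel_left]
    exact circRk_circPar_lt (by omega) (by omega) (hpos w hw) hn
  · exact tverts_parTree (Set.mem_univ _) fun _ _ _ => Set.mem_univ _
  · refine arcDisj_parTree fun w _ _ hw h => hij ?_
    have h1 := congrArg Fin.val (add_left_cancel h)
    have h2 := circPar_inj (by omega) (by omega) (by omega) (by omega) hn h1
    exact Fin.ext (by omega)

/-- Arc-disjoint spanning trees are internally disjoint when `S` is the whole vertex set, and
trivially so when there is only one of them. -/
lemma minVSC_circ {n k ℓ : ℕ} (hk : 2 ≤ k) (hkn : k ≤ n) (hn : ℓ < n) (h : ℓ = 1 ∨ k = n) :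
    MinVSC (circ n ℓ) k ℓ := by
  refine minVSC_of_ncard_le hk hkn _ ?_ (ncard_circ_le n ℓ)
  rw [le_kappaK_iff hk hkn]
  intro S r hr hS
  obtain ⟨f, hf, hd⟩ := circ_branchings hn r
  refine ⟨f, fun i => ⟨(hf i).1, (hf i).2.1, (hf i).2.2 ▸ Set.subset_univ _⟩,
    fun i j hij => ⟨hd i j hij, ?_⟩⟩
  rcases h with rfl | rfl
  · exact absurd (Subsingleton.elim i j) hij
  · rw [(hf i).2.2, (hf j).2.2, Set.univ_inter]
    exact (Set.eq_univ_iff_ncard S |>.mpr (by simpa using hS)).symm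

/-! ### The extremal function -/

lemma mul_le_fMin {n k ℓ : ℕ} (hk : 2 ≤ k) (hkn : k ≤ n) (hln : ℓ ≤ n - 1) :
    n * ℓ ≤ fMin n k ℓ := by
  obtain ⟨D, hD⟩ := exists_minVSC _ (le_kappaK_completeD hk hkn hln)
  refine le_csInf ⟨_, D, hD, rfl⟩ ?_
  rintro m ⟨D', hD', rfl⟩
  exact mul_le_ncard_arcs hk hkn D' hD'.1

lemma fMin_eq {n k ℓ : ℕ} (hk : 2 ≤ k) (hkn : k ≤ n) (hn : ℓ < n) (h : ℓ = 1 ∨ k = n) :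
    fMin n k ℓ = n * ℓ :=
  le_antisymm (le_trans (Nat.sInf_le ⟨circ n ℓ, minVSC_circ hk hkn hn h, rfl⟩)
    (ncard_circ_le n ℓ)) (mul_le_fMin hk hkn (by omega))

/-- `f(n,k,ℓ) ≥ nℓ` for `2 ≤ k ≤ n`, `1 ≤ ℓ ≤ n-1`;
moreover `f(n,k,1) = n`, and `f(n,n,ℓ) = nℓ` for `2 ≤ ℓ ≤ n-1`. -/
theorem stmt_12 (n k ℓ : ℕ) (hk : 2 ≤ k) (hkn : k ≤ n) (hl : 1 ≤ ℓ)
    (hln : ℓ ≤ n - 1) :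
    n * ℓ ≤ fMin n k ℓ ∧
    fMin n k 1 = n ∧
    (2 ≤ ℓ → fMin n n ℓ = n * ℓ) := by
  refine ⟨mul_le_fMin hk hkn hln, ?_, fun _ => ?_⟩
  · simpa using fMin_eq hk hkn (by omega : 1 < n) (Or.inl rfl)
  · exact fMin_eq (hk.trans hkn) le_rfl (by omega) (Or.inr rfl)

end TreeConn
end
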